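/- arXiv:1104.1409 — 4 statements merged into one kernel-verified Lean document; each statement's English description precedes it below -/
import Mathlib

section
/- For every object (V,β) of SHS, the triple (M(V,β), W, F) is a real mixed Hodge structure. Moreover the functor M is exact (it sends sequences of SHS-objects that are short exact on underlying vector spaces to sequences of MHS that are short exact on underlying vector spaces), and for every n the weight-graded piece gr^W_n M(V,β) is isomorphic, as a pure Hodge structure of weight n, to the real Hodge structure 𝒲_nV whose complexification is ⊕_{p+q=n} V^{pq}. In particular dim_ℝ M(V,β) = dim_ℝ V. -/
/-!
Proof idea.  In the coordinate centred at a point `c`, the equation `D_β f = 0` is equivalent to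
the integral equation `f + N_c f = f(c)` with `N_c f = ∫₀ˣ β(t + c) f(t) dt`
(`SHSObj.mem_ker_iff`).  As `β` strictly lowers weights, `N_c` is nilpotent, so `1 + N_c` is
invertible and the evaluation `E c : M(V,β)_ℂ → V_ℂ` is an isomorphism for every `c`
(`SHSObj.sol_exists`, `SHSObj.sol_unique`); since `D_β` commutes with complex conjugation, the
solutions do have a real structure (`SHSObj.jM_injective`, `SHSObj.jM_surjective`), and `c = 0`
gives `M(V,β) ≅ V`.

Whenever a subspace of `V_ℂ[x]` is stable under `N_c`, a solution lies in it as soon as its value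
at `c` does (`SHSObj.taylorMap_mem`).  This identifies the filtrations: under every `E c` the
weight filtration of `M(V,β)` corresponds to that of `V` (`SHSObj.mem_WC`), under `E i` the Hodge
filtration corresponds to `F^p V_ℂ` (`SHSObj.mem_MF`), because `f` lies in the twisted
filtration exactly when its `k`-th Taylor coefficient at `i` lies in `F^{p-k}`, and hence under
`E (-i)` the conjugate filtration corresponds to `F̄^q V_ℂ` (`SHSObj.mem_conj_MF`).  A solution of
weight at most `n` is constant modulo weight `n - 1`, so on `gr^W_n` the three evaluations at
`0`, `i` and `-i` coincide (`SHSObj.wproj_E`).  Both filtrations on `gr^W_n M(V,β)_ℂ` are thereby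
those of the weight `n` part of the bigraded space `V_ℂ`, which gives opposedness and the
isomorphism with `𝒲_n V`.  Exactness follows from the compatibility of `D_β` with morphisms and
from the fact that solutions are determined by arbitrary values at `0`.
-/

/-!
# STATEMENT 1

For every object `(V, β)` of `SHS`, the triple `(M(V,β), W, F)` is a real mixed Hodge
structure; the functor `M` is exact, `gr^W_n M(V,β)` is isomorphic as a pure Hodge
structure of weight `n` to `𝒲_n V` (the real Hodge structure with complexification
`⊕_{p+q=n} V^{pq}`), and `dim_ℝ M(V,β) = dim_ℝ V`.

Conventions:
* the complexification of a real vector space `U` is `ℂ ⊗[ℝ] U`, with complex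
  conjugation `σ` acting on the first tensor factor;
* `U ⊗ k[x]` is modelled as finitely supported sequences `ℕ →₀ U` of coefficients;
* an object of SHS is a finite-dimensional real vector space `V` with a bigrading
  `V_ℂ = ⊕ V^{pq}` satisfying `σ(V^{pq}) = V^{qp}`, together with a finitely supported
  family `β^{ab} : V_ℂ → V_ℂ` (`a,b ≥ 0`) with `β^{ab}(V^{pq}) ⊆ V^{p-a-1,q-b-1}` and
  `σ ∘ β^{ab} ∘ σ = β^{ba}`;
* `D_β f = df/dx + β(x)·f` with `β(x) = Σ β^{ab} (x-i)^a (x+i)^b`, and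
  `M(V,β) = ker D_β ∩ (V ⊗ ℝ[x])`.
-/

noncomputable section

open TensorProduct DirectSum Polynomial

/-! ## Complexification and conjugation -/

variable (V : Type) [AddCommGroup V] [Module ℝ V]

/-- The canonical map `V → ℂ ⊗[ℝ] V`, `v ↦ 1 ⊗ v`. -/
def toC : V →ₗ[ℝ] (ℂ ⊗[ℝ] V) := TensorProduct.mk ℝ ℂ V 1

/-- Complex conjugation on `ℂ ⊗[ℝ] V` (as a real-linear map). -/
def sigmaR : (ℂ ⊗[ℝ] V) →ₗ[ℝ] (ℂ ⊗[ℝ] V) :=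
  LinearMap.rTensor V Complex.conjAe.toLinearMap

lemma sigma_smul (c : ℂ) (x : ℂ ⊗[ℝ] V) :
    sigmaR V (c • x) = (starRingEnd ℂ) c • sigmaR V x := by
  unfold sigmaR
  induction x using TensorProduct.induction_on with
  | zero => simp
  | tmul d v => simp [TensorProduct.smul_tmul', smul_eq_mul, map_mul]
  | add a b ha hb => simp only [smul_add, map_add, ha, hb]

/-- Complex conjugation on `ℂ ⊗[ℝ] V`, as a conjugate-linear map. -/
def sigmaC : (ℂ ⊗[ℝ] V) →ₛₗ[starRingEnd ℂ] (ℂ ⊗[ℝ] V) where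
  toFun := sigmaR V
  map_add' := map_add _
  map_smul' := sigma_smul V

/-! ## Real mixed Hodge structures -/

variable {V}

/-- The complex-conjugate filtration `F̄ = σ⁻¹(F) = σ(F)`. -/
def conjFil (F : Submodule ℂ (ℂ ⊗[ℝ] V)) : Submodule ℂ (ℂ ⊗[ℝ] V) :=
  F.comap (sigmaC V)

/-- The complexification `(W_n V)_ℂ ⊆ V_ℂ` of a real subspace. -/
def WC (W : ℤ → Submodule ℝ V) (n : ℤ) : Submodule ℂ (ℂ ⊗[ℝ] V) :=
  (W n).baseChange ℂ

/-- The filtration induced by a filtration `G` of `V_ℂ` on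
`gr^W_n V_ℂ = (W_n V)_ℂ/(W_{n-1} V)_ℂ`. -/
def grFil (W : ℤ → Submodule ℝ V) (G : ℤ → Submodule ℂ (ℂ ⊗[ℝ] V)) (n p : ℤ) :
    Submodule ℂ (↥(WC W n) ⧸ (WC W (n - 1)).comap (WC W n).subtype) :=
  (((G p).comap (WC W n).subtype)).map ((WC W (n - 1)).comap (WC W n).subtype).mkQ

/-- `(V, W, F)` is a real mixed Hodge structure: `V` is finite dimensional, `W` is
increasing, exhaustive and Hausdorff, `F` is decreasing, exhaustive and bounded, and
`gr_F^p gr_{F̄}^q gr^W_n V_ℂ = 0` whenever `p + q ≠ n` (opposedness). -/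
def IsRealMHS (W : ℤ → Submodule ℝ V) (F : ℤ → Submodule ℂ (ℂ ⊗[ℝ] V)) : Prop :=
  FiniteDimensional ℝ V ∧
  Monotone W ∧ (∃ a, W a = ⊥) ∧ (∃ b, W b = ⊤) ∧
  Antitone F ∧ (∃ p, F p = ⊤) ∧ (∃ q, F q = ⊥) ∧
  ∀ n p q : ℤ, p + q ≠ n →
    grFil W F n p ⊓ grFil W (fun j => conjFil (F j)) n q ≤
      (grFil W F n (p + 1) ⊓ grFil W (fun j => conjFil (F j)) n q) ⊔
        grFil W (fun j => conjFil (F j)) n (q + 1)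

/-! ## Polynomial modules -/

section PolynomialSide

variable (U : Type) [AddCommGroup U] [Module ℂ U]

/-- Differentiation `d/dx` on `U ⊗ ℂ[x] = ℕ →₀ U`. -/
def derivMap : (ℕ →₀ U) →ₗ[ℂ] (ℕ →₀ U) :=
  Finsupp.lsum ℂ fun n => (n : ℂ) • Finsupp.lsingle (n - 1)

/-- The operator "multiply by the polynomial `q(x)` and apply `g` to coefficients"
on `U ⊗ ℂ[x] = ℕ →₀ U`. -/
def polyOp (q : Polynomial ℂ) (g : U →ₗ[ℂ] U) : (ℕ →₀ U) →ₗ[ℂ] (ℕ →₀ U) :=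
  Finsupp.lsum ℂ fun n => q.sum fun k c => (Finsupp.lsingle (n + k)) ∘ₗ (c • g)

/-- The element `w ⊗ q(x)` of `U ⊗ ℂ[x] = ℕ →₀ U`. -/
def ofPoly (q : Polynomial ℂ) (w : U) : ℕ →₀ U :=
  q.sum fun k c => Finsupp.single k (c • w)

/-- The twisted Hodge filtration `F^p (U ⊗ ℂ[x]) := Σ_j F^j U · (x−i)^{p−j} ℂ[x]`
(with `(x−i)^m ℂ[x] := ℂ[x]` for `m ≤ 0`). -/
def twistedFil (Ffam : ℤ → Submodule ℂ U) (p : ℤ) : Submodule ℂ (ℕ →₀ U) :=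
  ⨆ j : ℤ, Submodule.span ℂ
    {f | ∃ w ∈ Ffam j, ∃ k : ℕ, (p - j : ℤ) ≤ k ∧
      f = ofPoly U ((X - C Complex.I) ^ k) w}

end PolynomialSide

/-- The subspace `S ⊗ ℝ[x]` of `U ⊗ ℝ[x]` determined by a real subspace `S ⊆ U`. -/
def coeffSubR {U : Type} [AddCommGroup U] [Module ℝ U] (S : Submodule ℝ U) :
    Submodule ℝ (ℕ →₀ U) where
  carrier := {f | ∀ n, f n ∈ S}
  add_mem' := fun hf hg n => by
    simpa [Finsupp.add_apply] using S.add_mem (hf n) (hg n)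
  zero_mem' := fun n => by simp
  smul_mem' := fun c f hf n => by
    simpa [Finsupp.smul_apply] using S.smul_mem c (hf n)

/-! ## Objects of SHS -/

/-- An object of the category `SHS`. -/
structure SHSObj where
  V : Type
  [acg : AddCommGroup V]
  [mod : Module ℝ V]
  findim : FiniteDimensional ℝ V
  grading : ℤ × ℤ → Submodule ℂ (ℂ ⊗[ℝ] V)
  internal : DirectSum.IsInternal grading
  conj_grading : ∀ p q : ℤ, ∀ x ∈ grading (p, q), sigmaR V x ∈ grading (q, p)
  β : ℕ × ℕ → ((ℂ ⊗[ℝ] V) →ₗ[ℂ] (ℂ ⊗[ℝ] V))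
  β_fin : (Function.support β).Finite
  β_deg : ∀ (a b : ℕ) (p q : ℤ), ∀ x ∈ grading (p, q),
    β (a, b) x ∈ grading (p - a - 1, q - b - 1)
  β_conj : ∀ (a b : ℕ) (x : ℂ ⊗[ℝ] V), sigmaR V (β (a, b) (sigmaR V x)) = β (b, a) x

attribute [instance] SHSObj.acg SHSObj.mod

namespace SHSObj

variable (A : SHSObj)

/-- The operator `D_β f = df/dx + β(x)·f` on `V_ℂ ⊗ ℂ[x]`,
where `β(x) = Σ_{a,b} β^{ab} (x−i)^a (x+i)^b`. -/
def Dbeta : (ℕ →₀ (ℂ ⊗[ℝ] A.V)) →ₗ[ℂ] (ℕ →₀ (ℂ ⊗[ℝ] A.V)) :=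
  derivMap _ + ∑ ab ∈ A.β_fin.toFinset,
    polyOp _ ((X - C Complex.I) ^ ab.1 * (X + C Complex.I) ^ ab.2) (A.β ab)

/-- Coefficientwise complexification `V ⊗ ℝ[x] → V_ℂ ⊗ ℂ[x]`. -/
def iotaP : (ℕ →₀ A.V) →ₗ[ℝ] (ℕ →₀ (ℂ ⊗[ℝ] A.V)) :=
  Finsupp.mapRange.linearMap (toC A.V)

/-- `M(V,β) = ker D_β ∩ (V ⊗ ℝ[x])`, the real polynomial solutions of `D_β f = 0`. -/
def Msub : Submodule ℝ (ℕ →₀ A.V) :=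
  LinearMap.ker (((A.Dbeta).restrictScalars ℝ) ∘ₗ A.iotaP)

/-- The Hodge filtration `F^j V_ℂ = ⊕_{p ≥ j, q} V^{pq}` attached to the bigrading. -/
def hodgeFil (j : ℤ) : Submodule ℂ (ℂ ⊗[ℝ] A.V) :=
  ⨆ (pq : ℤ × ℤ) (_ : j ≤ pq.1), A.grading pq

/-- The weight filtration `W_r V = V ∩ ⊕_{p+q≤r} V^{pq}` of the real vector space `V`. -/
def weightFil (r : ℤ) : Submodule ℝ A.V :=
  ((⨆ (pq : ℤ × ℤ) (_ : pq.1 + pq.2 ≤ r), A.grading pq).restrictScalars ℝ).comap (toC A.V)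

/-- The weight filtration of `M(V,β)`:  `W_r M = M ∩ (W_r V ⊗ ℝ[x])`. -/
def MW (r : ℤ) : Submodule ℝ ↥A.Msub :=
  (coeffSubR (A.weightFil r)).comap A.Msub.subtype

/-- The canonical map `ℂ ⊗ M(V,β) → V_ℂ ⊗ ℂ[x]` identifying the complexification of
`M(V,β)` with `ker D_β`. -/
def jM : (ℂ ⊗[ℝ] ↥A.Msub) →ₗ[ℂ] (ℕ →₀ (ℂ ⊗[ℝ] A.V)) :=
  LinearMap.liftBaseChange ℂ (A.iotaP ∘ₗ A.Msub.subtype)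

/-- The Hodge filtration of `M(V,β)`:
`F^p M(V,β)_ℂ = ker D_β ∩ Σ_j (F^j V_ℂ)·(x−i)^{p−j} ℂ[x]`. -/
def MF (p : ℤ) : Submodule ℂ (ℂ ⊗[ℝ] ↥A.Msub) :=
  (LinearMap.ker A.Dbeta ⊓ twistedFil _ A.hodgeFil p).comap A.jM

/-- The real Hodge structure `𝒲_n V`, with complexification `⊕_{p+q=n} V^{pq}`. -/
def calW (n : ℤ) : Submodule ℝ A.V :=
  ((⨆ (pq : ℤ × ℤ) (_ : pq.1 + pq.2 = n), A.grading pq).restrictScalars ℝ).comap (toC A.V)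

/-- The Hodge filtration of the weight-`n` pure Hodge structure `𝒲_n V`
(on its complexification `ℂ ⊗ 𝒲_n V`, via the canonical map to `V_ℂ`). -/
def calWF (n p : ℤ) : Submodule ℂ (ℂ ⊗[ℝ] ↥(A.calW n)) :=
  (⨆ (pq : ℤ × ℤ) (_ : pq.1 + pq.2 = n ∧ p ≤ pq.1), A.grading pq).comap
    (LinearMap.liftBaseChange ℂ ((toC A.V) ∘ₗ (A.calW n).subtype))

/-- The part of the Hodge filtration `F^p M(V,β)_ℂ` lying in `(W_n M)_ℂ`. -/
def MWF (n p : ℤ) : Submodule ℂ (ℂ ⊗[ℝ] ↥(A.MW n)) :=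
  (A.MF p).comap (LinearMap.baseChange ℂ (A.MW n).subtype)

end SHSObj

/-- A morphism of SHS.  (Its complexification preserves the bigradings and commutes
with the maps `β^{ab}`.) -/
structure SHSHom (A B : SHSObj) where
  f : A.V →ₗ[ℝ] B.V
  grading_compat : ∀ pq : ℤ × ℤ, ∀ x ∈ A.grading pq,
    LinearMap.baseChange ℂ f x ∈ B.grading pq
  β_compat : ∀ (ab : ℕ × ℕ) (x : ℂ ⊗[ℝ] A.V),
    LinearMap.baseChange ℂ f (A.β ab x) = B.β ab (LinearMap.baseChange ℂ f x)

/-- The map `V ⊗ ℝ[x] → V' ⊗ ℝ[x]` induced by a morphism of SHS. -/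
def SHSHom.polyMap {A B : SHSObj} (φ : SHSHom A B) : (ℕ →₀ A.V) →ₗ[ℝ] (ℕ →₀ B.V) :=
  Finsupp.mapRange.linearMap φ.f

/-! ### Polynomials with coefficients in a complex vector space -/

section Poly

variable {U : Type} [AddCommGroup U] [Module ℂ U]

lemma ofPoly_apply (q : Polynomial ℂ) (w : U) (n : ℕ) : ofPoly U q w n = q.coeff n • w := by
  classical
  unfold ofPoly
  rw [Polynomial.sum_def, Finsupp.finsetSum_apply]
  simp only [Finsupp.single_apply]
  rw [Finset.sum_ite_eq' q.support n]
  split_ifs with h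
  · rfl
  · simp [Polynomial.notMem_support_iff.mp h]

lemma ofPoly_add (q r : Polynomial ℂ) (w : U) :
    ofPoly U (q + r) w = ofPoly U q w + ofPoly U r w := by
  ext n; simp [ofPoly_apply, add_smul]

lemma single_eq_ofPoly (n : ℕ) (w : U) : Finsupp.single n w = ofPoly U (X ^ n) w := by
  ext m
  rw [ofPoly_apply, Polynomial.coeff_X_pow, Finsupp.single_apply]
  by_cases h : n = m
  · subst h; simp
  · rw [if_neg h, if_neg (Ne.symm h), zero_smul]

/-- `ofPoly` as a linear map in the vector. -/
def ofPolyL (q : Polynomial ℂ) : U →ₗ[ℂ] (ℕ →₀ U) where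
  toFun := ofPoly U q
  map_add' u v := by ext n; simp [ofPoly_apply]
  map_smul' c u := by ext n; simp only [ofPoly_apply, Finsupp.smul_apply, RingHom.id_apply]; rw [smul_comm]

/-- Two linear maps on `U[x]` which agree on every `w ⊗ x^n` agree on every `f`. -/
lemma poly_ext {N : Type} [AddCommGroup N] [Module ℂ N] {S T : (ℕ →₀ U) →ₗ[ℂ] N}
    (h : ∀ (n : ℕ) (w : U), S (ofPoly U (X ^ n) w) = T (ofPoly U (X ^ n) w)) : S = T := by
  refine Finsupp.lhom_ext fun n w => ?_
  rw [single_eq_ofPoly]; exact h n w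

lemma derivMap_single (n : ℕ) (w : U) :
    derivMap U (Finsupp.single n w) = (n : ℂ) • Finsupp.single (n - 1) w := by
  simp [derivMap]

lemma derivMap_ofPoly (q : Polynomial ℂ) (w : U) :
    derivMap U (ofPoly U q w) = ofPoly U (derivative q) w := by
  induction q using Polynomial.induction_on' with
  | add p q hp hq => rw [ofPoly_add, map_add, hp, hq, derivative_add, ofPoly_add]
  | monomial n a =>
    have h : ∀ (k : ℕ) (c : ℂ), ofPoly U (monomial k c) w = Finsupp.single k (c • w) := by
      intro k c
      ext m
      rw [ofPoly_apply, Polynomial.coeff_monomial, Finsupp.single_apply]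
      split_ifs <;> simp
    rw [derivative_monomial, h, h, derivMap_single, Finsupp.smul_single, smul_smul, mul_comm]

lemma polyOp_single (q : Polynomial ℂ) (g : U →ₗ[ℂ] U) (n : ℕ) (w : U) :
    polyOp U q g (Finsupp.single n w) = ofPoly U (q * X ^ n) (g w) := by
  ext m
  rw [ofPoly_apply, Polynomial.coeff_mul_X_pow']
  simp only [polyOp, Finsupp.lsum_single]
  rw [Polynomial.sum_def, LinearMap.sum_apply, Finsupp.finsetSum_apply]
  simp only [LinearMap.comp_apply, LinearMap.smul_apply, Finsupp.lsingle_apply,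
    Finsupp.single_apply]
  by_cases h : n ≤ m
  · rw [if_pos h, Finset.sum_eq_single (m - n)]
    · rw [if_pos (by omega)]
    · intro b _ hb; rw [if_neg (by omega)]
    · intro hb; rw [Polynomial.notMem_support_iff.mp hb]; simp
  · rw [if_neg h, zero_smul]
    refine Finset.sum_eq_zero fun b _ => if_neg (by omega)

lemma polyOp_ofPoly (q r : Polynomial ℂ) (g : U →ₗ[ℂ] U) (w : U) :
    polyOp U q g (ofPoly U r w) = ofPoly U (q * r) (g w) := by
  induction r using Polynomial.induction_on' with
  | add r s hr hs => rw [ofPoly_add, map_add, hr, hs, mul_add, ofPoly_add]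
  | monomial n a =>
    have h : ofPoly U (monomial n a) w = a • Finsupp.single n w := by
      ext m
      rw [ofPoly_apply, Polynomial.coeff_monomial, Finsupp.smul_apply, Finsupp.single_apply]
      split_ifs <;> simp
    rw [h, map_smul, polyOp_single]
    ext m
    rw [Finsupp.smul_apply, ofPoly_apply, ofPoly_apply, ← C_mul_X_pow_eq_monomial,
      show q * (C a * X ^ n) = C a * (q * X ^ n) by ring, coeff_C_mul, smul_smul]

lemma polyOp_zero (q : Polynomial ℂ) : polyOp U q 0 = 0 := by
  refine poly_ext fun n w => ?_
  rw [polyOp_ofPoly]; ext m; simp [ofPoly_apply]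

/-- The substitution `x ↦ x + c` on `U[x]`: the coefficients of `taylorMap c f` are the
Taylor coefficients of `f` at the point `c`. -/
def taylorMap (c : ℂ) : (ℕ →₀ U) →ₗ[ℂ] (ℕ →₀ U) :=
  Finsupp.lsum ℂ fun n => ofPolyL ((X + C c) ^ n)

lemma taylorMap_single (c : ℂ) (n : ℕ) (w : U) :
    taylorMap c (Finsupp.single n w) = ofPoly U ((X + C c) ^ n) w := by
  rw [taylorMap, Finsupp.lsum_single]; rfl

lemma taylorMap_ofPoly (c : ℂ) (q : Polynomial ℂ) (w : U) :
    taylorMap c (ofPoly U q w) = ofPoly U (q.comp (X + C c)) w := by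
  induction q using Polynomial.induction_on' with
  | add p q hp hq => rw [ofPoly_add, map_add, hp, hq, add_comp, ofPoly_add]
  | monomial n a =>
    have h : ofPoly U (monomial n a) w = a • Finsupp.single n w := by
      ext m
      rw [ofPoly_apply, Polynomial.coeff_monomial, Finsupp.smul_apply, Finsupp.single_apply]
      split_ifs <;> simp
    rw [h, map_smul, taylorMap_single, monomial_comp]
    ext m
    rw [Finsupp.smul_apply, ofPoly_apply, ofPoly_apply, coeff_C_mul, smul_smul]

lemma taylorMap_taylorMap (c d : ℂ) (f : ℕ →₀ U) :
    taylorMap c (taylorMap d f) = taylorMap (c + d) f := by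
  have : taylorMap c ∘ₗ taylorMap d = (taylorMap (c + d) : (ℕ →₀ U) →ₗ[ℂ] _) := by
    refine poly_ext fun n w => ?_
    rw [LinearMap.comp_apply, taylorMap_ofPoly, taylorMap_ofPoly, taylorMap_ofPoly]
    congr 1
    simp [add_assoc]
  exact LinearMap.congr_fun this f

lemma taylorMap_zero (f : ℕ →₀ U) : taylorMap 0 f = f := by
  have : taylorMap 0 = (LinearMap.id : (ℕ →₀ U) →ₗ[ℂ] _) := by
    refine poly_ext fun n w => ?_
    rw [taylorMap_ofPoly]; simp
  exact LinearMap.congr_fun this f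

lemma taylorMap_injective (c : ℂ) : Function.Injective (taylorMap c : (ℕ →₀ U) →ₗ[ℂ] _) :=
  Function.LeftInverse.injective (g := taylorMap (-c)) fun f => by
    rw [taylorMap_taylorMap, neg_add_cancel, taylorMap_zero]

lemma taylorMap_derivMap (c : ℂ) (f : ℕ →₀ U) :
    taylorMap c (derivMap U f) = derivMap U (taylorMap c f) := by
  have : taylorMap c ∘ₗ derivMap U = derivMap U ∘ₗ taylorMap c := by
    refine poly_ext fun n w => ?_
    rw [LinearMap.comp_apply, LinearMap.comp_apply, derivMap_ofPoly, taylorMap_ofPoly,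
      taylorMap_ofPoly, derivMap_ofPoly]
    congr 1
    simp [derivative_pow]
  exact LinearMap.congr_fun this f

lemma taylorMap_polyOp (c : ℂ) (q : Polynomial ℂ) (g : U →ₗ[ℂ] U) (f : ℕ →₀ U) :
    taylorMap c (polyOp U q g f) = polyOp U (q.comp (X + C c)) g (taylorMap c f) := by
  have : taylorMap c ∘ₗ polyOp U q g = polyOp U (q.comp (X + C c)) g ∘ₗ taylorMap c := by
    refine poly_ext fun n w => ?_
    rw [LinearMap.comp_apply, LinearMap.comp_apply, polyOp_ofPoly, taylorMap_ofPoly,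
      taylorMap_ofPoly, polyOp_ofPoly, mul_comp]
  exact LinearMap.congr_fun this f

/-- The value `f(c)` of `f ∈ U[x]` at `c`. -/
def evalAt (c : ℂ) : (ℕ →₀ U) →ₗ[ℂ] U := Finsupp.lapply 0 ∘ₗ taylorMap c

lemma evalAt_def (c : ℂ) (f : ℕ →₀ U) : evalAt c f = taylorMap c f 0 := rfl

lemma evalAt_zero (f : ℕ →₀ U) : evalAt 0 f = f 0 := by
  rw [evalAt_def, taylorMap_zero]

lemma evalAt_single (c : ℂ) (n : ℕ) (w : U) : evalAt c (Finsupp.single n w) = c ^ n • w := by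
  rw [evalAt_def, taylorMap_single, ofPoly_apply, coeff_zero_eq_eval_zero]
  simp

/-- Integration `f ↦ ∫₀ˣ f` on `U[x]`. -/
def integMap : (ℕ →₀ U) →ₗ[ℂ] (ℕ →₀ U) :=
  Finsupp.lsum ℂ fun n => ((n + 1 : ℂ)⁻¹) • Finsupp.lsingle (n + 1)

lemma integMap_single (n : ℕ) (w : U) :
    integMap (Finsupp.single n w) = ((n + 1 : ℂ)⁻¹) • Finsupp.single (n + 1) w := by
  simp [integMap]

lemma integMap_apply_zero (f : ℕ →₀ U) : integMap f 0 = 0 := by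
  induction f using Finsupp.induction_linear with
  | zero => simp
  | add f g hf hg => rw [map_add, Finsupp.add_apply, hf, hg, add_zero]
  | single n w => rw [integMap_single]; simp

lemma integMap_apply_succ (f : ℕ →₀ U) (n : ℕ) :
    integMap f (n + 1) = ((n + 1 : ℂ)⁻¹) • f n := by
  induction f using Finsupp.induction_linear with
  | zero => simp
  | add f g hf hg => rw [map_add integMap, Finsupp.add_apply, hf, hg, Finsupp.add_apply, smul_add]
  | single m w =>
    rw [integMap_single, Finsupp.smul_apply, Finsupp.single_apply, Finsupp.single_apply]
    by_cases h : m = n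
    · subst h; simp
    · rw [if_neg (by omega), if_neg h]; simp

lemma derivMap_integMap (f : ℕ →₀ U) : derivMap U (integMap f) = f := by
  induction f using Finsupp.induction_linear with
  | zero => simp
  | add f g hf hg => rw [map_add, map_add, hf, hg]
  | single n w =>
    have h : ((n : ℂ) + 1) ≠ 0 := by exact_mod_cast n.succ_ne_zero
    rw [integMap_single, map_smul, derivMap_single, smul_smul, Nat.add_sub_cancel]
    push_cast
    rw [inv_mul_cancel₀ h, one_smul]

lemma integMap_derivMap (f : ℕ →₀ U) :
    integMap (derivMap U f) = f - Finsupp.single 0 (f 0) := by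
  induction f using Finsupp.induction_linear with
  | zero => simp
  | add f g hf hg => rw [map_add, map_add, hf, hg, Finsupp.add_apply, Finsupp.single_add]; abel
  | single n w =>
    rw [derivMap_single, map_smul, integMap_single]
    cases n with
    | zero => simp
    | succ n =>
      have h : ((n : ℂ) + 1) ≠ 0 := by exact_mod_cast n.succ_ne_zero
      rw [Nat.add_sub_cancel, smul_smul]
      push_cast
      rw [mul_inv_cancel₀ h, one_smul]
      simp

/-- `{f : f_k ∈ S_k for all k}`, for a family of subspaces `S_k` bounding the coefficients. -/
def coefFam (S : ℕ → Submodule ℂ U) : Submodule ℂ (ℕ →₀ U) :=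
  ⨅ k, (S k).comap (Finsupp.lapply k)

lemma mem_coefFam {S : ℕ → Submodule ℂ U} {f : ℕ →₀ U} : f ∈ coefFam S ↔ ∀ k, f k ∈ S k := by
  simp [coefFam]

lemma single_zero_mem_coefFam {S : ℕ → Submodule ℂ U} {u : U} (h : u ∈ S 0) :
    Finsupp.single 0 u ∈ coefFam S := by
  rw [mem_coefFam]
  intro k
  rw [Finsupp.single_apply]
  split_ifs with hk
  · exact hk ▸ h
  · exact zero_mem _

/-- A linear map carrying the monomials of a coefficientwise defined subspace into `T`
carries the whole subspace into `T`. -/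
lemma map_mem_of_coefFam {N : Type} [AddCommGroup N] [Module ℂ N] {S : ℕ → Submodule ℂ U}
    {T : Submodule ℂ N} {L : (ℕ →₀ U) →ₗ[ℂ] N}
    (h : ∀ k, ∀ w ∈ S k, L (Finsupp.single k w) ∈ T) {f : ℕ →₀ U} (hf : f ∈ coefFam S) :
    L f ∈ T := by
  rw [mem_coefFam] at hf
  rw [← Finsupp.sum_single f, Finsupp.sum, map_sum]
  exact Submodule.sum_mem _ fun k _ => h k _ (hf k)

lemma ofPoly_mem_coefFam {S : ℕ → Submodule ℂ U} {q : Polynomial ℂ} {w : U}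
    (h : ∀ k, q.coeff k ≠ 0 → w ∈ S k) : ofPoly U q w ∈ coefFam S := by
  rw [mem_coefFam]
  intro k
  rw [ofPoly_apply]
  by_cases hk : q.coeff k = 0
  · rw [hk, zero_smul]; exact zero_mem _
  · exact Submodule.smul_mem _ _ (h k hk)

lemma taylorMap_mem_const (c : ℂ) {S : Submodule ℂ U} {f : ℕ →₀ U}
    (hf : f ∈ coefFam fun _ => S) : taylorMap c f ∈ coefFam fun _ => S := by
  refine map_mem_of_coefFam (fun k w hw => ?_) hf
  rw [taylorMap_single]
  exact ofPoly_mem_coefFam fun _ _ => hw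

lemma taylorMap_mem_const_iff (c : ℂ) {S : Submodule ℂ U} {f : ℕ →₀ U} :
    taylorMap c f ∈ coefFam (fun _ => S) ↔ f ∈ coefFam fun _ => S := by
  refine ⟨fun h => ?_, taylorMap_mem_const c⟩
  have := taylorMap_mem_const (-c) h
  rwa [taylorMap_taylorMap, neg_add_cancel, taylorMap_zero] at this

lemma evalAt_mem_const (c : ℂ) {S : Submodule ℂ U} {f : ℕ →₀ U}
    (hf : f ∈ coefFam fun _ => S) : evalAt c f ∈ S :=
  mem_coefFam.mp (taylorMap_mem_const c hf) 0

/-- Membership in the twisted filtration is read off from the Taylor coefficients at `i`: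
the coefficient of `(x-i)^k` must lie in `F^{p-k}`. -/
lemma mem_twistedFil {F : ℤ → Submodule ℂ U} (hF : Antitone F) (p : ℤ) (f : ℕ →₀ U) :
    f ∈ twistedFil U F p ↔ taylorMap Complex.I f ∈ coefFam fun k => F (p - k) := by
  constructor
  · intro hf
    have hle : twistedFil U F p ≤
        (coefFam fun k => F (p - k)).comap (taylorMap Complex.I) := by
      refine iSup_le fun j => Submodule.span_le.mpr ?_
      rintro _ ⟨w, hw, k, hk, rfl⟩
      change taylorMap Complex.I _ ∈ coefFam _
      rw [taylorMap_ofPoly]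
      have : ((X - C Complex.I : ℂ[X]) ^ k).comp (X + C Complex.I) = X ^ k := by simp
      rw [this]
      refine ofPoly_mem_coefFam fun m hm => ?_
      rw [Polynomial.coeff_X_pow] at hm
      have hmk : m = k := by by_contra h; exact hm (if_neg h)
      subst hmk
      exact hF (by omega) hw
    exact hle hf
  · intro hf
    rw [show f = taylorMap (-Complex.I) (taylorMap Complex.I f) by
      rw [taylorMap_taylorMap, neg_add_cancel, taylorMap_zero]]
    refine map_mem_of_coefFam (fun k w hw => ?_) hf
    refine Submodule.mem_iSup_of_mem (p - k) (Submodule.subset_span ?_)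
    refine ⟨w, hw, k, by omega, ?_⟩
    rw [taylorMap_single, C_neg, ← sub_eq_add_neg]

end Poly

/-! ### Complexifications -/

section Complexification

variable {E E' : Type} [AddCommGroup E] [Module ℝ E] [AddCommGroup E'] [Module ℝ E']

/-- The real part `ℂ ⊗ E → E`. -/
def reC : (ℂ ⊗[ℝ] E) →ₗ[ℝ] E := (TensorProduct.lid ℝ E) ∘ₗ LinearMap.rTensor E Complex.reLm

/-- The imaginary part `ℂ ⊗ E → E`. -/
def imC : (ℂ ⊗[ℝ] E) →ₗ[ℝ] E := (TensorProduct.lid ℝ E) ∘ₗ LinearMap.rTensor E Complex.imLm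

lemma re_im_C (x : ℂ ⊗[ℝ] E) : x = toC E (reC x) + Complex.I • toC E (imC x) := by
  induction x using TensorProduct.induction_on with
  | zero => simp
  | add x y hx hy =>
    rw [map_add, map_add, map_add, map_add, smul_add]
    nth_rewrite 1 [hx, hy]
    abel
  | tmul z v =>
    simp only [reC, imC, toC, LinearMap.comp_apply, LinearMap.rTensor_tmul,
      LinearEquiv.coe_coe, TensorProduct.lid_tmul, TensorProduct.mk_apply, Complex.reLm_coe,
      Complex.imLm_coe]
    rw [← TensorProduct.smul_tmul, ← TensorProduct.smul_tmul, TensorProduct.smul_tmul',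
      ← TensorProduct.add_tmul]
    congr 1
    apply Complex.ext <;> simp

lemma reC_toC (a : E) : reC (toC E a) = a := by simp [reC, toC]

lemma imC_toC (a : E) : imC (toC E a) = 0 := by simp [imC, toC]

lemma reC_I (a : E) : reC (Complex.I • toC E a) = 0 := by
  simp [reC, toC, TensorProduct.smul_tmul']

lemma imC_I (a : E) : imC (Complex.I • toC E a) = a := by
  simp [imC, toC, TensorProduct.smul_tmul']

lemma toC_injective : Function.Injective (toC E) :=
  Function.LeftInverse.injective reC_toC

lemma sigmaR_toC (a : E) : sigmaR E (toC E a) = toC E a := by simp [sigmaR, toC]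

lemma sigmaR_decomp (a b : E) :
    sigmaR E (toC E a + Complex.I • toC E b) = toC E a - Complex.I • toC E b := by
  rw [map_add, sigma_smul, sigmaR_toC, sigmaR_toC, Complex.conj_I, neg_smul, sub_eq_add_neg]

lemma sigmaR_sigmaR (x : ℂ ⊗[ℝ] E) : sigmaR E (sigmaR E x) = x := by
  rw [re_im_C x, sigmaR_decomp, map_sub, sigma_smul, sigmaR_toC, sigmaR_toC, Complex.conj_I,
    neg_smul, sub_neg_eq_add]

lemma sigmaR_re_im (x : ℂ ⊗[ℝ] E) :
    sigmaR E x = toC E (reC x) - Complex.I • toC E (imC x) := by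
  conv_lhs => rw [re_im_C x]
  exact sigmaR_decomp _ _

lemma toC_re (x : ℂ ⊗[ℝ] E) : toC E (reC x) = (2 : ℂ)⁻¹ • (x + sigmaR E x) := by
  have h : x + sigmaR E x = (toC E (reC x) + Complex.I • toC E (imC x)) +
      (toC E (reC x) - Complex.I • toC E (imC x)) := by rw [← re_im_C, ← sigmaR_re_im]
  rw [h, add_add_sub_cancel, ← two_smul ℂ, smul_smul]
  norm_num

lemma toC_im (x : ℂ ⊗[ℝ] E) :
    toC E (imC x) = (2 * Complex.I)⁻¹ • (x - sigmaR E x) := by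
  have h : x - sigmaR E x = (toC E (reC x) + Complex.I • toC E (imC x)) -
      (toC E (reC x) - Complex.I • toC E (imC x)) := by rw [← re_im_C, ← sigmaR_re_im]
  rw [h, add_sub_sub_cancel, ← two_smul ℂ, smul_smul, smul_smul, mul_assoc,
    inv_mul_cancel₀ (by simp), one_smul]

lemma toC_re_of_fixed {x : ℂ ⊗[ℝ] E} (h : sigmaR E x = x) : toC E (reC x) = x := by
  rw [toC_re, h, ← two_smul ℂ, smul_smul]; norm_num

lemma baseChange_toC (f : E →ₗ[ℝ] E') (a : E) :
    LinearMap.baseChange ℂ f (toC E a) = toC E' (f a) := by simp [toC]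

lemma liftBaseChange_toC {U : Type} [AddCommGroup U] [Module ℂ U] (f : E →ₗ[ℝ] U) (a : E) :
    LinearMap.liftBaseChange ℂ f (toC E a) = f a := by simp [toC]

lemma toC_mem_baseChange {S : Submodule ℝ E} {a : E} (h : a ∈ S) :
    toC E a ∈ S.baseChange ℂ := Submodule.tmul_mem_baseChange_of_mem 1 h

/-- Two `ℂ`-linear maps on `ℂ ⊗ E` which agree on `E` are equal. -/
lemma ext_toC {U : Type} [AddCommGroup U] [Module ℂ U] {S T : (ℂ ⊗[ℝ] E) →ₗ[ℂ] U}
    (h : ∀ a, S (toC E a) = T (toC E a)) (x : ℂ ⊗[ℝ] E) : S x = T x := by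
  rw [re_im_C x, map_add, map_add, map_smul, map_smul, h, h]

lemma baseChange_mem_of {S : Submodule ℝ E} {T : Submodule ℂ (ℂ ⊗[ℝ] E)}
    (h : ∀ a ∈ S, toC E a ∈ T) : S.baseChange ℂ ≤ T := by
  rw [Submodule.baseChange_eq_span, Submodule.span_le]
  rintro _ ⟨a, ha, rfl⟩
  exact h a ha

lemma baseChange_injective {f : E →ₗ[ℝ] E'} (hf : Function.Injective f) :
    Function.Injective (LinearMap.baseChange ℂ f) :=
  Module.Flat.lTensor_preserves_injective_linearMap (M := ℂ) f hf

lemma mem_baseChange_iff {S : Submodule ℝ E} {x : ℂ ⊗[ℝ] E} :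
    x ∈ S.baseChange ℂ ↔ ∃ y, LinearMap.baseChange ℂ S.subtype y = x := Iff.rfl

end Complexification

namespace SHSObj

variable (A : SHSObj)

/-! ### Bigraded subspaces and their projections -/

/-- The sum of the pieces `V^{pq}` with `(p,q)` in the set `P` of indices. -/
def gs (P : ℤ × ℤ → Prop) : Submodule ℂ (ℂ ⊗[ℝ] A.V) := ⨆ (pq : ℤ × ℤ) (_ : P pq), A.grading pq

/-- The isomorphism `⊕ V^{pq} ≃ V_ℂ`. -/
def gradEquiv : (⨁ pq, A.grading pq) ≃ₗ[ℂ] (ℂ ⊗[ℝ] A.V) :=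
  LinearEquiv.ofBijective (DirectSum.coeLinearMap A.grading) A.internal

lemma gradEquiv_lof {pq : ℤ × ℤ} (u : A.grading pq) :
    A.gradEquiv (DirectSum.lof ℂ (ℤ × ℤ) (fun pq => A.grading pq) pq u) = u :=
  DirectSum.coeLinearMap_lof A.grading pq u

open Classical in
/-- The projection of `V_ℂ` onto `gs P` along the remaining pieces of the bigrading. -/
def trunc (P : ℤ × ℤ → Prop) : (ℂ ⊗[ℝ] A.V) →ₗ[ℂ] (ℂ ⊗[ℝ] A.V) :=
  (DirectSum.toModule ℂ (ℤ × ℤ) (ℂ ⊗[ℝ] A.V)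
    fun pq => if P pq then (A.grading pq).subtype else 0) ∘ₗ
    A.gradEquiv.symm.toLinearMap

open Classical in
lemma trunc_homog (P : ℤ × ℤ → Prop) {pq : ℤ × ℤ} {u : ℂ ⊗[ℝ] A.V} (hu : u ∈ A.grading pq) :
    A.trunc P u = if P pq then u else 0 := by
  have : A.gradEquiv.symm u =
      DirectSum.lof ℂ (ℤ × ℤ) (fun pq => A.grading pq) pq ⟨u, hu⟩ := by
    rw [LinearEquiv.symm_apply_eq, gradEquiv_lof]
  rw [trunc, LinearMap.comp_apply, LinearEquiv.coe_coe, this, DirectSum.toModule_lof]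
  split_ifs <;> rfl

/-- Two additive maps which agree on all the pieces `V^{pq}` are equal. -/
lemma homog_ext {N : Type} [AddCommGroup N] {S T : (ℂ ⊗[ℝ] A.V) →+ N}
    (h : ∀ pq, ∀ u ∈ A.grading pq, S u = T u) (u : ℂ ⊗[ℝ] A.V) : S u = T u := by
  have hu : u ∈ ⨆ pq, A.grading pq := by
    rw [A.internal.submodule_iSup_eq_top]; trivial
  induction hu using Submodule.iSup_induction' with
  | mem pq u hu => exact h pq u hu
  | zero => simp
  | add x y _ _ hx hy => rw [map_add, map_add, hx, hy]

lemma grading_le_gs {P : ℤ × ℤ → Prop} {pq : ℤ × ℤ} (h : P pq) : A.grading pq ≤ A.gs P :=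
  le_iSup₂_of_le pq h le_rfl

lemma gs_mono {P Q : ℤ × ℤ → Prop} (h : ∀ pq, P pq → Q pq) : A.gs P ≤ A.gs Q :=
  iSup₂_le fun _ hp => A.grading_le_gs (h _ hp)

lemma trunc_mem (P : ℤ × ℤ → Prop) (u : ℂ ⊗[ℝ] A.V) : A.trunc P u ∈ A.gs P := by
  have h := A.homog_ext (S := ((A.gs P).mkQ ∘ₗ A.trunc P).toAddMonoidHom) (T := 0)
    (fun pq u hu => by
      change (A.gs P).mkQ (A.trunc P u) = 0
      rw [Submodule.mkQ_apply, Submodule.Quotient.mk_eq_zero, A.trunc_homog P hu]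
      split_ifs with hp
      · exact A.grading_le_gs hp hu
      · exact zero_mem _) u
  exact (Submodule.Quotient.mk_eq_zero _).mp h

lemma trunc_of_mem {P Q : ℤ × ℤ → Prop} (h : ∀ pq, P pq → Q pq) {u : ℂ ⊗[ℝ] A.V}
    (hu : u ∈ A.gs P) : A.trunc Q u = u := by
  have hle : A.gs P ≤ LinearMap.ker (A.trunc Q - LinearMap.id) := by
    refine iSup₂_le fun pq hp u hu => ?_
    rw [LinearMap.mem_ker, LinearMap.sub_apply, A.trunc_homog Q hu, if_pos (h pq hp)]
    simp
  exact sub_eq_zero.mp (hle hu)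

lemma trunc_of_disjoint {P Q : ℤ × ℤ → Prop} (h : ∀ pq, P pq → ¬ Q pq) {u : ℂ ⊗[ℝ] A.V}
    (hu : u ∈ A.gs P) : A.trunc Q u = 0 := by
  have hle : A.gs P ≤ LinearMap.ker (A.trunc Q) := by
    refine iSup₂_le fun pq hp u hu => ?_
    rw [LinearMap.mem_ker, A.trunc_homog Q hu, if_neg (h pq hp)]
  exact hle hu

/-- Projecting an element of `gs P` by `trunc Q` lands in the sum over `P ∩ Q`. -/
lemma trunc_mem_inf {P Q R : ℤ × ℤ → Prop} (h : ∀ pq, P pq → Q pq → R pq) {u : ℂ ⊗[ℝ] A.V}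
    (hu : u ∈ A.gs P) : A.trunc Q u ∈ A.gs R := by
  have hle : A.gs P ≤ (A.gs R).comap (A.trunc Q) := by
    refine iSup₂_le fun pq hp u hu => ?_
    rw [Submodule.mem_comap, A.trunc_homog Q hu]
    split_ifs with hq
    · exact A.grading_le_gs (h pq hp hq) hu
    · exact zero_mem _
  exact hle hu

lemma gs_inf {P Q R : ℤ × ℤ → Prop} (h : ∀ pq, P pq → Q pq → R pq) {u : ℂ ⊗[ℝ] A.V}
    (hP : u ∈ A.gs P) (hQ : u ∈ A.gs Q) : u ∈ A.gs R := by
  rw [← A.trunc_of_mem (fun _ h => h) hQ]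
  exact A.trunc_mem_inf h hP

lemma trunc_add_trunc_not (P : ℤ × ℤ → Prop) (u : ℂ ⊗[ℝ] A.V) :
    A.trunc P u + A.trunc (fun pq => ¬ P pq) u = u := by
  refine A.homog_ext (S := (A.trunc P + A.trunc fun pq => ¬ P pq).toAddMonoidHom)
    (T := AddMonoidHom.id _) (fun pq u hu => ?_) u
  change A.trunc P u + A.trunc _ u = u
  rw [A.trunc_homog _ hu, A.trunc_homog _ hu]
  by_cases h : P pq <;> simp [h]

lemma sigma_trunc (P : ℤ × ℤ → Prop) (u : ℂ ⊗[ℝ] A.V) :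
    sigmaR A.V (A.trunc P u) = A.trunc (fun pq => P pq.swap) (sigmaR A.V u) := by
  refine A.homog_ext
    (S := (sigmaR A.V).toAddMonoidHom.comp (A.trunc P).toAddMonoidHom)
    (T := (A.trunc fun pq => P pq.swap).toAddMonoidHom.comp (sigmaR A.V).toAddMonoidHom)
    (fun pq u hu => ?_) u
  change sigmaR A.V (A.trunc P u) = A.trunc _ (sigmaR A.V u)
  rw [A.trunc_homog _ hu, A.trunc_homog _ (A.conj_grading pq.1 pq.2 u hu)]
  simp only [Prod.swap_prod_mk]
  split_ifs <;> simp

lemma sigma_mem_gs {P Q : ℤ × ℤ → Prop} (h : ∀ p q, P (p, q) → Q (q, p)) {u : ℂ ⊗[ℝ] A.V}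
    (hu : u ∈ A.gs P) : sigmaR A.V u ∈ A.gs Q := by
  rw [← A.trunc_of_mem (fun _ h => h) hu, sigma_trunc]
  exact A.gs_mono (fun pq hpq => h pq.2 pq.1 hpq) (A.trunc_mem _ _)

lemma hodgeFil_eq (j : ℤ) : A.hodgeFil j = A.gs fun pq => j ≤ pq.1 := rfl

lemma hodgeFil_antitone : Antitone A.hodgeFil := fun _ _ h =>
  A.gs_mono fun _ hp => le_trans h hp

/-- The complexified weight filtration `⊕_{p+q ≤ r} V^{pq}`. -/
def wt (r : ℤ) : Submodule ℂ (ℂ ⊗[ℝ] A.V) := A.gs fun pq => pq.1 + pq.2 ≤ r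

lemma wt_mono {r s : ℤ} (h : r ≤ s) : A.wt r ≤ A.wt s :=
  A.gs_mono fun _ hp => le_trans hp h

lemma mem_weightFil {r : ℤ} {v : A.V} : v ∈ A.weightFil r ↔ toC A.V v ∈ A.wt r := Iff.rfl

lemma sigma_mem_wt {r : ℤ} {u : ℂ ⊗[ℝ] A.V} (hu : u ∈ A.wt r) : sigmaR A.V u ∈ A.wt r :=
  A.sigma_mem_gs (fun p q h => by omega) hu

/-- The projection of `V_ℂ` onto its part of weight `n`. -/
def wproj (n : ℤ) : (ℂ ⊗[ℝ] A.V) →ₗ[ℂ] (ℂ ⊗[ℝ] A.V) := A.trunc fun pq => pq.1 + pq.2 = n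

lemma sigma_wproj (n : ℤ) (u : ℂ ⊗[ℝ] A.V) :
    sigmaR A.V (A.wproj n u) = A.wproj n (sigmaR A.V u) := by
  rw [wproj, sigma_trunc]
  congr 2
  funext pq
  simp [add_comm]

lemma wproj_eq_zero_iff {n : ℤ} {u : ℂ ⊗[ℝ] A.V} (hu : u ∈ A.wt n) :
    A.wproj n u = 0 ↔ u ∈ A.wt (n - 1) := by
  constructor
  · intro h
    rw [← A.trunc_add_trunc_not (fun pq => pq.1 + pq.2 = n) u]
    rw [wproj] at h
    rw [h, zero_add]
    exact A.trunc_mem_inf (fun pq h h' => by omega) hu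
  · exact A.trunc_of_disjoint fun pq h => by omega

/-- As `V` is finite dimensional, only finitely many pieces are nonzero, so that `V` is
concentrated in a bounded box of bidegrees. -/
lemma exists_bound : ∃ N : ℕ, ∀ P : ℤ × ℤ → Prop,
    (∀ p q : ℤ, |p| ≤ N → |q| ≤ N → P (p, q)) → A.gs P = ⊤ := by
  have := A.findim
  have hfin : {pq | A.grading pq ≠ ⊥}.Finite :=
    WellFoundedGT.finite_ne_bot_of_iSupIndep A.internal.submodule_iSupIndep
  obtain ⟨N, hN⟩ := (hfin.image fun pq : ℤ × ℤ => pq.1.natAbs + pq.2.natAbs).bddAbove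
  refine ⟨N, fun P hP => ?_⟩
  rw [eq_top_iff, ← A.internal.submodule_iSup_eq_top]
  refine iSup_le fun pq => ?_
  by_cases h : A.grading pq = ⊥
  · rw [h]; exact bot_le
  · have := hN ⟨pq, h, rfl⟩
    simp only at this
    exact A.grading_le_gs (hP pq.1 pq.2 (abs_le.mpr (by omega)) (abs_le.mpr (by omega)))

lemma gs_eq_bot_of_compl {P : ℤ × ℤ → Prop} (h : A.gs (fun pq => ¬ P pq) = ⊤) :
    A.gs P = ⊥ := by
  rw [eq_bot_iff]
  intro u hu
  have h1 : u ∈ A.gs fun pq => ¬ P pq := by rw [h]; trivial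
  rw [← A.trunc_of_mem (fun _ h => h) hu, A.trunc_of_disjoint (fun _ h => h) h1]
  exact zero_mem _

lemma exists_wt_bound : ∃ N : ℕ, A.wt N = ⊤ ∧ A.wt (-N) = ⊥ := by
  obtain ⟨N, hN⟩ := A.exists_bound
  refine ⟨2 * N + 1, hN _ fun p q hp hq => ?_,
    A.gs_eq_bot_of_compl (hN _ fun p q hp hq => ?_)⟩
  · rw [abs_le] at hp hq; push_cast; omega
  · rw [abs_le] at hp hq; push_cast; omega

lemma exists_hodge_bound : (∃ p, A.hodgeFil p = ⊤) ∧ ∃ p, A.hodgeFil p = ⊥ := by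
  obtain ⟨N, hN⟩ := A.exists_bound
  refine ⟨⟨-N, hN _ fun p q hp hq => ?_⟩, ⟨N + 1, A.gs_eq_bot_of_compl (hN _ fun p q hp hq => ?_)⟩⟩
  · rw [abs_le] at hp; omega
  · rw [abs_le] at hp; omega

lemma β_mem_wt (ab : ℕ × ℕ) {r : ℤ} {u : ℂ ⊗[ℝ] A.V} (hu : u ∈ A.wt r) :
    A.β ab u ∈ A.wt (r - 1) := by
  have hle : A.wt r ≤ (A.wt (r - 1)).comap (A.β ab) :=
    iSup₂_le fun pq hp u hu => A.grading_le_gs (by dsimp only; omega)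
      (A.β_deg ab.1 ab.2 pq.1 pq.2 u hu)
  exact hle hu

lemma β_mem_hodgeFil (ab : ℕ × ℕ) {p : ℤ} {u : ℂ ⊗[ℝ] A.V} (hu : u ∈ A.hodgeFil p) :
    A.β ab u ∈ A.hodgeFil (p - ab.1 - 1) := by
  have hle : A.hodgeFil p ≤ (A.hodgeFil (p - ab.1 - 1)).comap (A.β ab) :=
    iSup₂_le fun pq hp u hu => A.grading_le_gs (by dsimp only; omega)
      (A.β_deg ab.1 ab.2 pq.1 pq.2 u hu)
  exact hle hu

/-! ### Solutions of `D_β f = 0` -/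

/-- The polynomial `(x-i)^a (x+i)^b`. -/
def bpoly (ab : ℕ × ℕ) : Polynomial ℂ := (X - C Complex.I) ^ ab.1 * (X + C Complex.I) ^ ab.2

/-- Multiplication by `β(x + c)`. -/
def Bop (c : ℂ) : (ℕ →₀ (ℂ ⊗[ℝ] A.V)) →ₗ[ℂ] (ℕ →₀ (ℂ ⊗[ℝ] A.V)) :=
  ∑ ab ∈ A.β_fin.toFinset, polyOp _ ((bpoly ab).comp (X + C c)) (A.β ab)

/-- The operator `f ↦ ∫₀ˣ β(t + c) f(t) dt`. In the coordinate centred at `c`, the equation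
`D_β f = 0` reads `f + Nop c f = f(c)`. -/
def Nop (c : ℂ) : (ℕ →₀ (ℂ ⊗[ℝ] A.V)) →ₗ[ℂ] (ℕ →₀ (ℂ ⊗[ℝ] A.V)) := integMap ∘ₗ A.Bop c

lemma Nop_apply_zero (c : ℂ) (f : ℕ →₀ (ℂ ⊗[ℝ] A.V)) : A.Nop c f 0 = 0 :=
  integMap_apply_zero _

lemma taylorMap_Dbeta (c : ℂ) (f : ℕ →₀ (ℂ ⊗[ℝ] A.V)) :
    taylorMap c (A.Dbeta f) = derivMap _ (taylorMap c f) + A.Bop c (taylorMap c f) := by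
  rw [Dbeta, LinearMap.add_apply, map_add, taylorMap_derivMap, Bop, LinearMap.sum_apply,
    LinearMap.sum_apply, map_sum]
  congr 1
  exact Finset.sum_congr rfl fun ab _ => taylorMap_polyOp _ _ _ _

lemma mem_ker_iff (c : ℂ) (f : ℕ →₀ (ℂ ⊗[ℝ] A.V)) :
    A.Dbeta f = 0 ↔ taylorMap c f + A.Nop c (taylorMap c f) = Finsupp.single 0 (evalAt c f) := by
  rw [← (taylorMap_injective c).eq_iff, map_zero, taylorMap_Dbeta, evalAt_def]
  set g := taylorMap c f
  constructor
  · intro h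
    have h' := congrArg integMap h
    rw [map_add, map_zero, integMap_derivMap] at h'
    rw [← sub_eq_zero, ← h', Nop, LinearMap.comp_apply]
    abel
  · intro h
    have h' := congrArg (derivMap _) h
    rw [map_add, Nop, LinearMap.comp_apply, derivMap_integMap, derivMap_single] at h'
    rw [h']; simp

/-- `β(x)` strictly lowers weights, hence so does `Nop c`. -/
lemma Nop_mem_wt (c : ℂ) {r : ℤ} {f : ℕ →₀ (ℂ ⊗[ℝ] A.V)} (hf : f ∈ coefFam fun _ => A.wt r) :
    A.Nop c f ∈ coefFam fun _ => A.wt (r - 1) := by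
  refine map_mem_of_coefFam (fun k w hw => ?_) hf
  rw [Nop, LinearMap.comp_apply, Bop, LinearMap.sum_apply, map_sum]
  refine Submodule.sum_mem _ fun ab _ => ?_
  rw [polyOp_single, mem_coefFam]
  rintro (_ | m)
  · rw [integMap_apply_zero]; exact zero_mem _
  · rw [integMap_apply_succ, ofPoly_apply]
    exact Submodule.smul_mem _ _ (Submodule.smul_mem _ _ (A.β_mem_wt ab hw))

/-- The Taylor coefficient at `i` of order `k` of `(x-i)^a (x+i)^b` vanishes for `k < a`; this
compensates the drop by `a + 1` in the Hodge filtration caused by `β^{ab}`, the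
remaining `1` being supplied by the integration. -/
lemma Nop_mem_hodge (p : ℤ) {f : ℕ →₀ (ℂ ⊗[ℝ] A.V)}
    (hf : f ∈ coefFam fun k : ℕ => A.hodgeFil (p - k)) :
    A.Nop Complex.I f ∈ coefFam fun k : ℕ => A.hodgeFil (p - k) := by
  refine map_mem_of_coefFam (fun k w hw => ?_) hf
  rw [Nop, LinearMap.comp_apply, Bop, LinearMap.sum_apply, map_sum]
  refine Submodule.sum_mem _ fun ab _ => ?_
  rw [polyOp_single, mem_coefFam]
  rintro (_ | m)
  · rw [integMap_apply_zero]; exact zero_mem _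
  · rw [integMap_apply_succ, ofPoly_apply]
    refine Submodule.smul_mem _ _ ?_
    have hq : (bpoly ab).comp (X + C Complex.I) * X ^ k =
        (X + C Complex.I + C Complex.I) ^ ab.2 * X ^ (ab.1 + k) := by
      simp [bpoly]; ring
    rw [hq, Polynomial.coeff_mul_X_pow']
    split_ifs with hm
    · exact Submodule.smul_mem _ _
        (A.hodgeFil_antitone (by push_cast; omega) (A.β_mem_hodgeFil ab hw))
    · rw [zero_smul]; exact zero_mem _

lemma Nop_nilpotent (c : ℂ) : IsNilpotent (A.Nop c) := by
  obtain ⟨N, htop, hbot⟩ := A.exists_wt_bound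
  have key : ∀ (m : ℕ) (f : ℕ →₀ (ℂ ⊗[ℝ] A.V)),
      (A.Nop c ^ m) f ∈ coefFam fun _ => A.wt (N - m) := by
    intro m
    induction m with
    | zero => intro f; rw [mem_coefFam]; intro k; simp [htop]
    | succ m ih =>
      intro f
      rw [pow_succ', Module.End.mul_apply]
      have := A.Nop_mem_wt c (ih f)
      rwa [show (N - m - 1 : ℤ) = N - (m + 1 : ℕ) by push_cast; ring] at this
  refine ⟨2 * N, LinearMap.ext fun f => Finsupp.ext fun k => ?_⟩
  have := mem_coefFam.mp (key (2 * N) f) k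
  rw [show (N - (2 * N : ℕ) : ℤ) = -N by push_cast; ring, hbot] at this
  exact this

/-- If `S` is stable under the nilpotent operator `Nop c`, then a solution lies in `S` (in the
coordinate centred at `c`) as soon as its constant term does. -/
lemma taylorMap_mem (c : ℂ) {S : Submodule ℂ (ℕ →₀ (ℂ ⊗[ℝ] A.V))}
    (hS : ∀ f ∈ S, A.Nop c f ∈ S) {f : ℕ →₀ (ℂ ⊗[ℝ] A.V)} (hf : A.Dbeta f = 0)
    (h0 : Finsupp.single 0 (evalAt c f) ∈ S) : taylorMap c f ∈ S := by
  rw [A.mem_ker_iff c] at hf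
  set g := taylorMap c f
  have hpow : ∀ m : ℕ, ∀ h ∈ S, (A.Nop c ^ m) h ∈ S := by
    intro m
    induction m with
    | zero => intro h hh; simpa using hh
    | succ m ih => intro h hh; rw [pow_succ', Module.End.mul_apply]; exact hS _ (ih h hh)
  have down : ∀ m : ℕ, (A.Nop c ^ m) g ∈ S → g ∈ S := by
    intro m
    induction m with
    | zero => intro h; simpa using h
    | succ m ih =>
      intro h
      refine ih ?_
      rw [show g = Finsupp.single 0 (evalAt c f) - A.Nop c g by rw [← hf]; abel, map_sub,
        ← Module.End.mul_apply, ← pow_succ]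
      exact S.sub_mem (hpow m _ h0) h
  obtain ⟨m, hm⟩ := A.Nop_nilpotent c
  exact down m (by rw [hm]; exact zero_mem _)

lemma sol_unique (c : ℂ) {f : ℕ →₀ (ℂ ⊗[ℝ] A.V)} (hf : A.Dbeta f = 0) (h : evalAt c f = 0) :
    f = 0 := by
  have := A.taylorMap_mem c (S := ⊥) (fun g hg => by
    rw [Submodule.mem_bot] at hg ⊢; rw [hg, map_zero]) hf (by rw [h]; simp)
  exact taylorMap_injective c (by rw [map_zero]; exact this)

lemma sol_exists (c : ℂ) (u : ℂ ⊗[ℝ] A.V) : ∃ f, A.Dbeta f = 0 ∧ evalAt c f = u := by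
  obtain ⟨e, he⟩ : IsUnit (1 + A.Nop c : Module.End ℂ (ℕ →₀ (ℂ ⊗[ℝ] A.V))) := IsNilpotent.isUnit_one_add (R := Module.End ℂ (ℕ →₀ (ℂ ⊗[ℝ] A.V))) (A.Nop_nilpotent c)
  let g := (e⁻¹ : (Module.End ℂ (ℕ →₀ (ℂ ⊗[ℝ] A.V)))ˣ).val (Finsupp.single 0 u)
  have hg : g + A.Nop c g = Finsupp.single 0 u := by
    have : (e.val * (e⁻¹).val) (Finsupp.single 0 u) = Finsupp.single 0 u := by
      rw [Units.mul_inv]; rfl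
    rw [he] at this
    exact this
  have hg0 : g 0 = u := by
    have := congrArg (fun h => h 0) hg
    simpa [Nop_apply_zero] using this
  have ht : taylorMap c (taylorMap (-c) g) = g := by
    rw [taylorMap_taylorMap, add_neg_cancel, taylorMap_zero]
  refine ⟨taylorMap (-c) g, ?_, by rw [evalAt_def, ht, hg0]⟩
  rw [A.mem_ker_iff c, evalAt_def, ht, hg, hg0]

/-- A solution lies in `W_r` as soon as one of its values does. -/
lemma sol_mem_wt (c : ℂ) {r : ℤ} {f : ℕ →₀ (ℂ ⊗[ℝ] A.V)} (hf : A.Dbeta f = 0)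
    (h : evalAt c f ∈ A.wt r) : f ∈ coefFam fun _ => A.wt r := by
  rw [← taylorMap_mem_const_iff c]
  refine A.taylorMap_mem c (fun g hg => ?_) hf (single_zero_mem_coefFam h)
  rw [mem_coefFam] at hg ⊢
  intro k
  exact A.wt_mono (by omega) (mem_coefFam.mp (A.Nop_mem_wt c (mem_coefFam.mpr hg)) k)

/-- Modulo lower weight, a solution in `W_r` is constant. -/
lemma sol_evalAt_sub (c : ℂ) {r : ℤ} {f : ℕ →₀ (ℂ ⊗[ℝ] A.V)} (hf : A.Dbeta f = 0)
    (h : f ∈ coefFam fun _ => A.wt r) : evalAt c f - evalAt 0 f ∈ A.wt (r - 1) := by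
  have h0 := (A.mem_ker_iff 0 f).mp hf
  rw [taylorMap_zero] at h0
  have h1 : evalAt c f = evalAt 0 f - evalAt c (A.Nop 0 f) := by
    rw [eq_sub_iff_add_eq, ← map_add, h0, evalAt_single]; simp
  rw [h1, sub_sub_cancel_left]
  exact Submodule.neg_mem _ (evalAt_mem_const c (A.Nop_mem_wt 0 h))

/-- A solution lies in the twisted Hodge filtration if and only if its value at `i` lies in
the Hodge filtration of `V_ℂ`. -/
lemma sol_mem_twistedFil {p : ℤ} {f : ℕ →₀ (ℂ ⊗[ℝ] A.V)} (hf : A.Dbeta f = 0) :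
    f ∈ twistedFil _ A.hodgeFil p ↔ evalAt Complex.I f ∈ A.hodgeFil p := by
  rw [mem_twistedFil A.hodgeFil_antitone]
  constructor
  · intro h
    have := mem_coefFam.mp h 0
    simpa [evalAt_def] using this
  · intro h
    exact A.taylorMap_mem _ (fun g hg => A.Nop_mem_hodge p hg) hf
      (single_zero_mem_coefFam (by simpa using h))

/-! ### The real structure on solutions -/

/-- Complex conjugation on `V_ℂ ⊗ ℂ[x]`. -/
def conjP : (ℕ →₀ (ℂ ⊗[ℝ] A.V)) →ₗ[ℝ] (ℕ →₀ (ℂ ⊗[ℝ] A.V)) :=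
  Finsupp.mapRange.linearMap (sigmaR A.V)

lemma conjP_apply (f : ℕ →₀ (ℂ ⊗[ℝ] A.V)) (n : ℕ) : A.conjP f n = sigmaR A.V (f n) := by
  simp [conjP]

lemma iotaP_apply (f : ℕ →₀ A.V) (n : ℕ) : A.iotaP f n = toC A.V (f n) := by simp [iotaP]

lemma conjP_ofPoly (q : Polynomial ℂ) (w : ℂ ⊗[ℝ] A.V) :
    A.conjP (ofPoly _ q w) = ofPoly _ (q.map (starRingEnd ℂ)) (sigmaR A.V w) := by
  ext n
  rw [conjP_apply, ofPoly_apply, ofPoly_apply, sigma_smul, coeff_map]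

lemma conjP_derivMap (f : ℕ →₀ (ℂ ⊗[ℝ] A.V)) :
    A.conjP (derivMap _ f) = derivMap _ (A.conjP f) := by
  induction f using Finsupp.induction_linear with
  | zero => simp
  | add f g hf hg => simp only [map_add, hf, hg]
  | single n w =>
    rw [single_eq_ofPoly, derivMap_ofPoly, conjP_ofPoly, conjP_ofPoly, derivMap_ofPoly,
      derivative_map]

lemma conjP_polyOp (ab : ℕ × ℕ) (f : ℕ →₀ (ℂ ⊗[ℝ] A.V)) :
    A.conjP (polyOp _ (bpoly ab) (A.β ab) f) =
      polyOp _ (bpoly ab.swap) (A.β ab.swap) (A.conjP f) := by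
  induction f using Finsupp.induction_linear with
  | zero => simp
  | add f g hf hg => simp only [map_add, hf, hg]
  | single n w =>
    rw [single_eq_ofPoly, polyOp_ofPoly, conjP_ofPoly, conjP_ofPoly, polyOp_ofPoly]
    congr 1
    · simp [bpoly, Polynomial.map_mul, Polynomial.map_pow, ← sub_eq_add_neg, mul_comm]
    · have := A.β_conj ab.1 ab.2 (sigmaR A.V w)
      rwa [sigmaR_sigmaR] at this

lemma Dbeta_eq (f : ℕ →₀ (ℂ ⊗[ℝ] A.V)) {s : Finset (ℕ × ℕ)} (hs : A.β_fin.toFinset ⊆ s) :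
    A.Dbeta f = derivMap _ f + ∑ ab ∈ s, polyOp _ (bpoly ab) (A.β ab) f := by
  rw [Dbeta, LinearMap.add_apply, LinearMap.sum_apply]
  congr 1
  refine Finset.sum_subset hs fun ab _ hab => ?_
  have : A.β ab = 0 := by simpa using hab
  rw [this, polyOp_zero, LinearMap.zero_apply]

lemma Dbeta_conjP (f : ℕ →₀ (ℂ ⊗[ℝ] A.V)) : A.Dbeta (A.conjP f) = A.conjP (A.Dbeta f) := by
  classical
  rw [A.Dbeta_eq f (Finset.subset_union_left (s₂ := A.β_fin.toFinset.image Prod.swap)),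
    A.Dbeta_eq (A.conjP f) (Finset.subset_union_left (s₂ := A.β_fin.toFinset.image Prod.swap)),
    map_add, conjP_derivMap, map_sum]
  congr 1
  refine Finset.sum_nbij' Prod.swap Prod.swap ?_ ?_ (by simp) (by simp) ?_
  · rintro ⟨a, b⟩; simp; tauto
  · rintro ⟨a, b⟩; simp; tauto
  · intro ab _; rw [conjP_polyOp, Prod.swap_swap]

lemma conjP_evalAt (c : ℂ) (f : ℕ →₀ (ℂ ⊗[ℝ] A.V)) :
    sigmaR A.V (evalAt c f) = evalAt ((starRingEnd ℂ) c) (A.conjP f) := by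
  induction f using Finsupp.induction_linear with
  | zero => simp
  | add f g hf hg => simp only [map_add, hf, hg]
  | single n w =>
    have : A.conjP (Finsupp.single n w) = Finsupp.single n (sigmaR A.V w) := by
      simp [conjP]
    rw [this, evalAt_single, evalAt_single, sigma_smul, map_pow]

lemma mem_Msub {f : ℕ →₀ A.V} : f ∈ A.Msub ↔ A.Dbeta (A.iotaP f) = 0 := Iff.rfl

lemma jM_toC (m : A.Msub) : A.jM (toC _ m) = A.iotaP m := liftBaseChange_toC _ _

lemma Dbeta_jM (x : ℂ ⊗[ℝ] A.Msub) : A.Dbeta (A.jM x) = 0 :=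
  ext_toC (S := A.Dbeta ∘ₗ A.jM) (T := 0) (fun m => by
    rw [LinearMap.comp_apply, jM_toC]; exact m.2) x

lemma jM_sigma (x : ℂ ⊗[ℝ] A.Msub) : A.jM (sigmaR _ x) = A.conjP (A.jM x) := by
  have hI : ∀ m : A.Msub, A.conjP (A.iotaP m) = A.iotaP m := fun m => by
    ext n; rw [conjP_apply, iotaP_apply, sigmaR_toC]
  rw [re_im_C x, sigmaR_decomp, map_sub, map_add, map_add, map_smul, jM_toC, jM_toC, hI]
  rw [sub_eq_add_neg, ← neg_smul]
  congr 1
  ext n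
  rw [conjP_apply, Finsupp.smul_apply, Finsupp.smul_apply, sigma_smul, Complex.conj_I,
    iotaP_apply, sigmaR_toC]

lemma jM_injective : Function.Injective A.jM := by
  rw [← LinearMap.ker_eq_bot, LinearMap.ker_eq_bot']
  intro x hx
  rw [re_im_C x, map_add, map_smul, jM_toC, jM_toC] at hx
  have h1 : ∀ n, toC A.V ((reC x : A.Msub).1 n) + Complex.I • toC A.V ((imC x : A.Msub).1 n) = 0 :=
    fun n => by
      have := congrArg (fun h => h n) hx
      simpa [iotaP_apply] using this
  have hr : reC x = 0 := by
    ext n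
    have := congrArg reC (h1 n)
    rw [map_add, reC_toC, reC_I, add_zero, map_zero] at this
    exact this
  have hi : imC x = 0 := by
    ext n
    have := congrArg imC (h1 n)
    rw [map_add, imC_toC, imC_I, zero_add, map_zero] at this
    exact this
  rw [re_im_C x, hr, hi]; simp

lemma jM_surjective {f : ℕ →₀ (ℂ ⊗[ℝ] A.V)} (hf : A.Dbeta f = 0) : ∃ x, A.jM x = f := by
  have hc : A.Dbeta (A.conjP f) = 0 := by rw [Dbeta_conjP, hf, map_zero]
  let a : ℕ →₀ A.V := Finsupp.mapRange.linearMap reC f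
  let b : ℕ →₀ A.V := Finsupp.mapRange.linearMap imC f
  have ha : A.iotaP a = (2 : ℂ)⁻¹ • (f + A.conjP f) := by
    ext n
    rw [iotaP_apply, Finsupp.smul_apply, Finsupp.add_apply, conjP_apply, ← toC_re]
    simp [a]
  have hb : A.iotaP b = (2 * Complex.I)⁻¹ • (f - A.conjP f) := by
    ext n
    rw [iotaP_apply, Finsupp.smul_apply, Finsupp.sub_apply, conjP_apply, ← toC_im]
    simp [b]
  have ha' : a ∈ A.Msub := by
    rw [mem_Msub, ha, map_smul, map_add, hf, hc]; simp
  have hb' : b ∈ A.Msub := by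
    rw [mem_Msub, hb, map_smul, map_sub, hf, hc]; simp
  refine ⟨toC _ ⟨a, ha'⟩ + Complex.I • toC _ ⟨b, hb'⟩, ?_⟩
  rw [map_add, map_smul, jM_toC, jM_toC]
  ext n
  rw [Finsupp.add_apply, Finsupp.smul_apply, iotaP_apply, iotaP_apply]
  conv_rhs => rw [re_im_C (f n)]
  simp [a, b]

/-- Evaluation at `c`, as a map `M(V,β)_ℂ → V_ℂ`. -/
def E (c : ℂ) : (ℂ ⊗[ℝ] A.Msub) →ₗ[ℂ] (ℂ ⊗[ℝ] A.V) := evalAt c ∘ₗ A.jM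

lemma E_def (c : ℂ) (x : ℂ ⊗[ℝ] A.Msub) : A.E c x = evalAt c (A.jM x) := rfl

lemma E_injective (c : ℂ) : Function.Injective (A.E c) := by
  rw [← LinearMap.ker_eq_bot, LinearMap.ker_eq_bot']
  intro x hx
  exact A.jM_injective (by rw [map_zero]; exact A.sol_unique c (A.Dbeta_jM x) hx)

lemma E_surjective (c : ℂ) : Function.Surjective (A.E c) := fun u => by
  obtain ⟨f, hf, rfl⟩ := A.sol_exists c u
  obtain ⟨x, rfl⟩ := A.jM_surjective hf
  exact ⟨x, rfl⟩

lemma E_sigma (c : ℂ) (x : ℂ ⊗[ℝ] A.Msub) :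
    A.E ((starRingEnd ℂ) c) (sigmaR _ x) = sigmaR A.V (A.E c x) := by
  rw [E_def, E_def, jM_sigma, conjP_evalAt]

lemma E_zero_toC (m : A.Msub) : A.E 0 (toC _ m) = toC A.V (m.1 0) := by
  rw [E_def, jM_toC, evalAt_zero, iotaP_apply]

/-- Evaluation at `0`, as a map `M(V,β) → V`. -/
def ev0 : A.Msub →ₗ[ℝ] A.V := Finsupp.lapply 0 ∘ₗ A.Msub.subtype

lemma ev0_injective : Function.Injective A.ev0 := fun m m' h => by
  refine toC_injective (A.E_injective 0 ?_)
  rw [E_zero_toC, E_zero_toC]; exact congrArg _ h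

lemma ev0_surjective : Function.Surjective A.ev0 := fun v => by
  obtain ⟨x, hx⟩ := A.E_surjective 0 (toC A.V v)
  refine ⟨reC x, ?_⟩
  rw [re_im_C x, map_add, map_smul, E_zero_toC, E_zero_toC] at hx
  have := congrArg reC hx
  rwa [map_add, reC_toC, reC_I, reC_toC, add_zero] at this

/-! ### The filtrations of `M(V,β)` -/

lemma jM_mem_iff (c : ℂ) {r : ℤ} (x : ℂ ⊗[ℝ] A.Msub) :
    A.jM x ∈ coefFam (fun _ => A.wt r) ↔ A.E c x ∈ A.wt r :=
  ⟨evalAt_mem_const c, A.sol_mem_wt c (A.Dbeta_jM x)⟩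

lemma mem_MW {r : ℤ} {m : A.Msub} : m ∈ A.MW r ↔ toC A.V (m.1 0) ∈ A.wt r := by
  rw [← E_zero_toC, ← A.jM_mem_iff 0, jM_toC, mem_coefFam]
  simp only [iotaP_apply]
  rfl

lemma mem_WC (c : ℂ) {r : ℤ} {x : ℂ ⊗[ℝ] A.Msub} : x ∈ WC A.MW r ↔ A.E c x ∈ A.wt r := by
  rw [← A.jM_mem_iff c, A.jM_mem_iff 0]
  constructor
  · intro h
    have hle : WC A.MW r ≤ (A.wt r).comap (A.E 0) := baseChange_mem_of fun m hm => by
      rw [Submodule.mem_comap, E_zero_toC]; exact A.mem_MW.mp hm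
    exact hle h
  · intro h
    have hs : A.E 0 (sigmaR _ x) ∈ A.wt r := by
      have := A.E_sigma 0 x
      rw [map_zero] at this
      rw [this]; exact A.sigma_mem_wt h
    rw [re_im_C x]
    refine Submodule.add_mem _ (toC_mem_baseChange ?_)
      (Submodule.smul_mem _ _ (toC_mem_baseChange ?_))
    · rw [mem_MW, ← E_zero_toC, toC_re, map_smul, map_add]
      exact Submodule.smul_mem _ _ (Submodule.add_mem _ h hs)
    · rw [mem_MW, ← E_zero_toC, toC_im, map_smul, map_sub]
      exact Submodule.smul_mem _ _ (Submodule.sub_mem _ h hs)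

lemma mem_MF {p : ℤ} {x : ℂ ⊗[ℝ] A.Msub} : x ∈ A.MF p ↔ A.E Complex.I x ∈ A.hodgeFil p := by
  rw [MF, Submodule.mem_comap, Submodule.mem_inf, LinearMap.mem_ker,
    and_iff_right (A.Dbeta_jM x), A.sol_mem_twistedFil (A.Dbeta_jM x), E_def]

/-- The complex-conjugate Hodge filtration of `V_ℂ`. -/
def hodgeFilBar (q : ℤ) : Submodule ℂ (ℂ ⊗[ℝ] A.V) := A.gs fun pq => q ≤ pq.2

lemma mem_conj_MF {q : ℤ} {x : ℂ ⊗[ℝ] A.Msub} :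
    x ∈ conjFil (A.MF q) ↔ A.E (-Complex.I) x ∈ A.hodgeFilBar q := by
  change sigmaR _ x ∈ A.MF q ↔ _
  have h := A.E_sigma (-Complex.I) x
  rw [map_neg, Complex.conj_I, neg_neg] at h
  rw [mem_MF, h]
  constructor
  · intro hx
    rw [← sigmaR_sigmaR (A.E (-Complex.I) x)]
    exact A.sigma_mem_gs (fun _ _ h => h) hx
  · intro hx
    exact A.sigma_mem_gs (fun _ _ h => h) hx

/-- On `W_n M(V,β)_ℂ`, the weight `n` component of the value at `c` does not depend on `c`. -/
lemma wproj_E (c d : ℂ) {n : ℤ} {x : ℂ ⊗[ℝ] A.Msub} (hx : x ∈ WC A.MW n) :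
    A.wproj n (A.E c x) = A.wproj n (A.E d x) := by
  have key : ∀ c : ℂ, A.wproj n (A.E c x) = A.wproj n (A.E 0 x) := fun c => by
    have h := A.sol_evalAt_sub c (A.Dbeta_jM x) ((A.jM_mem_iff 0 x).mpr ((A.mem_WC 0).mp hx))
    rw [← sub_eq_zero, ← map_sub]
    exact (A.wproj_eq_zero_iff (A.wt_mono (by omega) h)).mpr h
  rw [key c, key d]

/-- The weight `n` component of the value at `0`: this identifies `gr^W_n M(V,β)_ℂ` with the
weight `n` part of `V_ℂ`. -/
def kap (n : ℤ) : (ℂ ⊗[ℝ] A.Msub) →ₗ[ℂ] (ℂ ⊗[ℝ] A.V) := A.wproj n ∘ₗ A.E 0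

lemma kap_eq (c : ℂ) {n : ℤ} {x : ℂ ⊗[ℝ] A.Msub} (hx : x ∈ WC A.MW n) :
    A.kap n x = A.wproj n (A.E c x) := A.wproj_E 0 c hx

lemma kap_eq_zero_iff {n : ℤ} {x : ℂ ⊗[ℝ] A.Msub} (hx : x ∈ WC A.MW n) :
    A.kap n x = 0 ↔ x ∈ WC A.MW (n - 1) := by
  rw [A.mem_WC 0, kap, LinearMap.comp_apply]
  exact A.wproj_eq_zero_iff ((A.mem_WC 0).mp hx)

/-- An element of weight `n` of `V_ℂ` is the weight `n` component of a solution with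
prescribed value at `c`. -/
lemma exists_kap (c : ℂ) {n : ℤ} {u : ℂ ⊗[ℝ] A.V} (hu : u ∈ A.gs fun pq => pq.1 + pq.2 = n) :
    ∃ x ∈ WC A.MW n, A.E c x = u ∧ A.kap n x = u := by
  obtain ⟨x, rfl⟩ := A.E_surjective c u
  have hx : x ∈ WC A.MW n := (A.mem_WC c).mpr (A.gs_mono (fun pq h => h.le) hu)
  exact ⟨x, hx, rfl, by rw [A.kap_eq c hx, wproj, A.trunc_of_mem (fun _ h => h) hu]⟩

lemma mk_mem_grFil {n p : ℤ} {G : ℤ → Submodule ℂ (ℂ ⊗[ℝ] A.Msub)} {x : WC A.MW n} :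
    ((WC A.MW (n - 1)).comap (WC A.MW n).subtype).mkQ x ∈ grFil A.MW G n p ↔
      ∃ y ∈ G p, y ∈ WC A.MW n ∧ A.kap n y = A.kap n x := by
  constructor
  · rintro ⟨y, hy, hyx⟩
    refine ⟨y, hy, y.2, ?_⟩
    rw [Submodule.mkQ_apply, Submodule.mkQ_apply, Submodule.Quotient.eq] at hyx
    rw [← sub_eq_zero, ← map_sub]
    exact (A.kap_eq_zero_iff (Submodule.sub_mem _ y.2 x.2)).mpr hyx
  · rintro ⟨y, hy, hyn, hyx⟩
    refine ⟨⟨y, hyn⟩, hy, ?_⟩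
    rw [Submodule.mkQ_apply, Submodule.mkQ_apply, Submodule.Quotient.eq]
    rw [← sub_eq_zero, ← map_sub] at hyx
    exact (A.kap_eq_zero_iff (Submodule.sub_mem _ hyn x.2)).mp hyx

/-- If a filtration step is the preimage under `E c` of a sum of pieces of the bigrading, then
the filtration it induces on `gr^W_n` is that sum of pieces, restricted to weight `n`. -/
lemma mk_mem_grFil_iff (c : ℂ) {n p : ℤ} {G : ℤ → Submodule ℂ (ℂ ⊗[ℝ] A.Msub)}
    {P : ℤ × ℤ → Prop} (hG : ∀ y, y ∈ G p ↔ A.E c y ∈ A.gs P) {x : WC A.MW n} :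
    ((WC A.MW (n - 1)).comap (WC A.MW n).subtype).mkQ x ∈ grFil A.MW G n p ↔
      A.kap n x ∈ A.gs P := by
  rw [mk_mem_grFil]
  constructor
  · rintro ⟨y, hy, hyn, hyx⟩
    rw [← hyx, A.kap_eq c hyn]
    exact A.trunc_mem_inf (fun _ h _ => h) ((hG y).mp hy)
  · intro h
    obtain ⟨y, hyn, hy, hyx⟩ := A.exists_kap c (n := n) (u := A.kap n x) (A.trunc_mem _ _)
    exact ⟨y, (hG y).mpr (by rw [hy]; exact h), hyn, hyx⟩

lemma opposed (n p q : ℤ) (hpq : p + q ≠ n) :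
    grFil A.MW A.MF n p ⊓ grFil A.MW (fun j => conjFil (A.MF j)) n q ≤
      (grFil A.MW A.MF n (p + 1) ⊓ grFil A.MW (fun j => conjFil (A.MF j)) n q) ⊔
        grFil A.MW (fun j => conjFil (A.MF j)) n (q + 1) := by
  intro ξ hξ
  obtain ⟨x, rfl⟩ := Submodule.mkQ_surjective _ ξ
  have hF : ∀ r (z : WC A.MW n), _ ↔ _ := fun r z =>
    A.mk_mem_grFil_iff Complex.I (G := A.MF) (p := r) (x := z) fun y => A.mem_MF
  have hFb : ∀ r (z : WC A.MW n), _ ↔ _ := fun r z =>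
    A.mk_mem_grFil_iff (-Complex.I) (G := fun j => conjFil (A.MF j)) (p := r) (x := z)
      fun y => A.mem_conj_MF
  obtain ⟨h1, h2⟩ := Submodule.mem_inf.mp hξ
  rw [hF] at h1
  rw [hFb] at h2
  set u := A.kap n x with hu
  have hn : u ∈ A.gs fun pq => pq.1 + pq.2 = n := A.trunc_mem _ _
  -- split `u` into its components with `p' ≥ p + 1` and with `p' = p`; as `p + q ≠ n`, the
  -- latter have `q' = n - p ≥ q + 1`
  let P : ℤ × ℤ → Prop := fun pq => p + 1 ≤ pq.1
  obtain ⟨y, hyn, -, hy⟩ := A.exists_kap 0 (n := n) (u := A.trunc P u)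
    (A.trunc_mem_inf (fun _ h _ => h) hn)
  have hsub : A.kap n ((x : ℂ ⊗[ℝ] A.Msub) - y) = A.trunc (fun pq => ¬ P pq) u := by
    rw [map_sub, hy, ← hu, sub_eq_iff_eq_add', A.trunc_add_trunc_not]
  have hx : x = ⟨y, hyn⟩ + (x - ⟨y, hyn⟩) := by abel
  rw [hx, map_add]
  refine Submodule.add_mem_sup (Submodule.mem_inf.mpr ⟨?_, ?_⟩) ?_
  · rw [hF, hy]
    exact A.trunc_mem P u
  · rw [hFb, hy]
    exact A.trunc_mem_inf (fun _ h _ => h) h2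
  · rw [hFb]
    change A.kap n ((x : ℂ ⊗[ℝ] A.Msub) - y) ∈ _
    rw [hsub]
    have h3 : u ∈ A.gs fun pq => pq.1 + pq.2 = n ∧ p ≤ pq.1 ∧ q ≤ pq.2 :=
      A.gs_inf (fun _ h h' => ⟨h, h'⟩) hn (A.gs_inf (R := fun pq => p ≤ pq.1 ∧ q ≤ pq.2)
        (fun _ h h' => ⟨h, h'⟩) h1 h2)
    exact A.trunc_mem_inf (fun pq h h' => by simp only [P] at h'; omega) h3

lemma finiteDimensional_Msub : FiniteDimensional ℝ A.Msub :=
  have := A.findim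
  FiniteDimensional.of_injective A.ev0 A.ev0_injective

lemma isRealMHS : IsRealMHS A.MW A.MF := by
  refine ⟨A.finiteDimensional_Msub, ?_, ?_, ?_, ?_, ?_, ?_, A.opposed⟩
  · intro r s h m hm
    rw [mem_MW] at hm ⊢
    exact A.wt_mono h hm
  · obtain ⟨N, -, h⟩ := A.exists_wt_bound
    refine ⟨-N, eq_bot_iff.mpr fun m hm => ?_⟩
    rw [mem_MW, h, Submodule.mem_bot, map_eq_zero_iff _ toC_injective] at hm
    exact A.ev0_injective (hm.trans (map_zero _).symm)
  · obtain ⟨N, h, -⟩ := A.exists_wt_bound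
    refine ⟨N, eq_top_iff.mpr fun m _ => ?_⟩
    rw [mem_MW, h]; trivial
  · intro p q h x hx
    rw [mem_MF] at hx ⊢
    exact A.hodgeFil_antitone h hx
  · obtain ⟨⟨p, h⟩, -⟩ := A.exists_hodge_bound
    refine ⟨p, eq_top_iff.mpr fun x _ => ?_⟩
    rw [mem_MF, h]; trivial
  · obtain ⟨-, p, h⟩ := A.exists_hodge_bound
    refine ⟨p, eq_bot_iff.mpr fun x hx => ?_⟩
    rw [mem_MF, h, Submodule.mem_bot] at hx
    exact A.E_injective _ (hx.trans (map_zero _).symm)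

/-! ### The weight-graded pieces -/

/-- The projection of `V` onto `𝒲_n V`, the real form of `wproj n`. -/
def wprojR (n : ℤ) : A.V →ₗ[ℝ] A.V :=
  reC ∘ₗ (A.wproj n).restrictScalars ℝ ∘ₗ toC A.V

lemma toC_wprojR (n : ℤ) (v : A.V) : toC A.V (A.wprojR n v) = A.wproj n (toC A.V v) :=
  toC_re_of_fixed (by
    change sigmaR A.V (A.wproj n (toC A.V v)) = A.wproj n (toC A.V v)
    rw [sigma_wproj, sigmaR_toC])

lemma mem_calW {n : ℤ} {v : A.V} :
    v ∈ A.calW n ↔ toC A.V v ∈ A.gs fun pq => pq.1 + pq.2 = n := Iff.rfl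

lemma wprojR_mem (n : ℤ) (v : A.V) : A.wprojR n v ∈ A.calW n := by
  rw [mem_calW, toC_wprojR]; exact A.trunc_mem _ _

/-- The map `W_n M(V,β) → 𝒲_n V`, `f ↦` the weight `n` component of `f(0)`. -/
def rho (n : ℤ) : A.MW n →ₗ[ℝ] A.calW n :=
  (A.wprojR n ∘ₗ A.ev0 ∘ₗ (A.MW n).subtype).codRestrict (A.calW n) fun _ => A.wprojR_mem _ _

lemma toC_rho (n : ℤ) (m : A.MW n) :
    toC A.V (A.rho n m).1 = A.kap n (toC _ m.1) := by
  change toC A.V (A.wprojR n (m.1.1 0)) = A.wproj n (A.E 0 (toC _ m.1))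
  rw [toC_wprojR, E_zero_toC]

lemma rho_surjective (n : ℤ) : Function.Surjective (A.rho n) := by
  rintro ⟨v, hv⟩
  obtain ⟨m, rfl⟩ := A.ev0_surjective v
  rw [mem_calW] at hv
  refine ⟨⟨m, A.mem_MW.mpr (A.gs_mono (fun pq h => h.le) hv)⟩, Subtype.ext (toC_injective ?_)⟩
  rw [toC_rho]
  change A.wproj n (A.E 0 (toC _ m)) = _
  rw [E_zero_toC]
  exact A.trunc_of_mem (fun _ h => h) hv

lemma ker_rho (n : ℤ) :
    LinearMap.ker (A.rho n) = (A.MW (n - 1)).comap (A.MW n).subtype := by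
  ext m
  rw [LinearMap.mem_ker, Submodule.mem_comap, Submodule.subtype_apply, mem_MW,
    ← A.wproj_eq_zero_iff (A.mem_MW.mp m.2), ← E_zero_toC, ← LinearMap.comp_apply,
    ← kap, ← toC_rho, map_eq_zero_iff _ toC_injective, Submodule.coe_eq_zero]

/-- The inclusion `(𝒲_n V)_ℂ → V_ℂ`. -/
def calWincl (n : ℤ) : (ℂ ⊗[ℝ] A.calW n) →ₗ[ℂ] (ℂ ⊗[ℝ] A.V) :=
  LinearMap.liftBaseChange ℂ ((toC A.V) ∘ₗ (A.calW n).subtype)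

lemma calWincl_toC (n : ℤ) (v : A.calW n) : A.calWincl n (toC _ v) = toC A.V v :=
  liftBaseChange_toC _ _

lemma calWincl_injective (n : ℤ) : Function.Injective (A.calWincl n) := by
  have : A.calWincl n = LinearMap.baseChange ℂ (A.calW n).subtype :=
    LinearMap.ext fun x => ext_toC (fun v => by
      rw [calWincl_toC, baseChange_toC, Submodule.subtype_apply]) x
  rw [this]
  exact baseChange_injective (Submodule.injective_subtype _)

lemma calWincl_rho (n : ℤ) (x : ℂ ⊗[ℝ] A.MW n) :
    A.calWincl n (LinearMap.baseChange ℂ (A.rho n) x) =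
      A.kap n (LinearMap.baseChange ℂ (A.MW n).subtype x) := by
  have h : ∀ m : A.MW n, A.calWincl n (LinearMap.baseChange ℂ (A.rho n) (toC (A.MW n) m)) =
      A.kap n (LinearMap.baseChange ℂ (A.MW n).subtype (toC (A.MW n) m)) := fun m => by
    have h1 : LinearMap.baseChange ℂ (A.rho n) (toC (A.MW n) m) = toC _ (A.rho n m) :=
      LinearMap.baseChange_tmul _ _ _
    have h2 : LinearMap.baseChange ℂ (A.MW n).subtype (toC (A.MW n) m) = toC _ m.1 :=
      LinearMap.baseChange_tmul _ _ _
    rw [h1, h2, calWincl_toC, toC_rho]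
  rw [re_im_C (E := A.MW n) x]
  simp only [map_add, map_smul]
  rw [h, h]

lemma mem_calWF {n p : ℤ} {y : ℂ ⊗[ℝ] A.calW n} :
    y ∈ A.calWF n p ↔ A.calWincl n y ∈ A.gs fun pq => pq.1 + pq.2 = n ∧ p ≤ pq.1 := Iff.rfl

lemma map_MWF (n p : ℤ) :
    (A.MWF n p).map (LinearMap.baseChange ℂ (A.rho n)) = A.calWF n p := by
  apply le_antisymm
  · rintro _ ⟨x, hx, rfl⟩
    rw [mem_calWF, calWincl_rho, A.kap_eq Complex.I (mem_baseChange_iff.mpr ⟨x, rfl⟩)]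
    exact A.trunc_mem_inf (fun _ h h' => ⟨h', h⟩) (A.mem_MF.mp hx)
  · intro y hy
    rw [mem_calWF] at hy
    obtain ⟨x, hxn, hx, hxy⟩ := A.exists_kap Complex.I (A.gs_mono (fun _ h => h.1) hy)
    obtain ⟨x, rfl⟩ := mem_baseChange_iff.mp hxn
    refine ⟨x, A.mem_MF.mpr ?_, A.calWincl_injective n ?_⟩
    · rw [hx]; exact A.gs_mono (fun _ h => h.2) hy
    · rw [calWincl_rho, hxy]

lemma finrank_Msub : Module.finrank ℝ A.Msub = Module.finrank ℝ A.V :=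
  (LinearEquiv.ofBijective A.ev0 ⟨A.ev0_injective, A.ev0_surjective⟩).finrank_eq

end SHSObj

/-! ### Functoriality and exactness -/

namespace SHSHom

variable {A B : SHSObj} (φ : SHSHom A B)

/-- The map `V_ℂ ⊗ ℂ[x] → V'_ℂ ⊗ ℂ[x]` induced by a morphism of SHS. -/
def polyMapC : (ℕ →₀ (ℂ ⊗[ℝ] A.V)) →ₗ[ℂ] (ℕ →₀ (ℂ ⊗[ℝ] B.V)) :=
  Finsupp.mapRange.linearMap (LinearMap.baseChange ℂ φ.f)

lemma polyMap_apply (f : ℕ →₀ A.V) (n : ℕ) : φ.polyMap f n = φ.f (f n) := by simp [polyMap]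

lemma polyMapC_ofPoly (q : Polynomial ℂ) (w : ℂ ⊗[ℝ] A.V) :
    φ.polyMapC (ofPoly _ q w) = ofPoly _ q (LinearMap.baseChange ℂ φ.f w) := by
  ext n
  simp [polyMapC, ofPoly_apply]

lemma polyMapC_iotaP (f : ℕ →₀ A.V) : φ.polyMapC (A.iotaP f) = B.iotaP (φ.polyMap f) := by
  ext n
  simp [polyMapC, SHSObj.iotaP_apply, polyMap_apply, baseChange_toC]

lemma polyMapC_Dbeta (f : ℕ →₀ (ℂ ⊗[ℝ] A.V)) :
    φ.polyMapC (A.Dbeta f) = B.Dbeta (φ.polyMapC f) := by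
  classical
  rw [A.Dbeta_eq f (Finset.subset_union_left (s₂ := B.β_fin.toFinset)),
    B.Dbeta_eq _ (Finset.subset_union_right (s₁ := A.β_fin.toFinset)), map_add, map_sum]
  congr 1
  · refine LinearMap.congr_fun (f := φ.polyMapC ∘ₗ derivMap _)
      (g := derivMap _ ∘ₗ φ.polyMapC) (poly_ext fun n w => ?_) f
    rw [LinearMap.comp_apply, LinearMap.comp_apply, derivMap_ofPoly, polyMapC_ofPoly,
      polyMapC_ofPoly, derivMap_ofPoly]
  · refine Finset.sum_congr rfl fun ab _ => ?_
    refine LinearMap.congr_fun (f := φ.polyMapC ∘ₗ polyOp _ _ _)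
      (g := polyOp _ _ _ ∘ₗ φ.polyMapC) (poly_ext fun n w => ?_) f
    rw [LinearMap.comp_apply, LinearMap.comp_apply, polyOp_ofPoly, polyMapC_ofPoly,
      polyMapC_ofPoly, polyOp_ofPoly, φ.β_compat]

lemma Dbeta_polyMap (f : ℕ →₀ A.V) :
    B.Dbeta (B.iotaP (φ.polyMap f)) = φ.polyMapC (A.Dbeta (A.iotaP f)) := by
  rw [← polyMapC_iotaP, polyMapC_Dbeta]

lemma polyMap_mem {f : ℕ →₀ A.V} (hf : f ∈ A.Msub) : φ.polyMap f ∈ B.Msub := by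
  rw [SHSObj.mem_Msub] at hf ⊢
  rw [Dbeta_polyMap, hf, map_zero]

lemma polyMap_injective (h : Function.Injective φ.f) : Function.Injective φ.polyMap :=
  fun f g hfg => Finsupp.ext fun n => h (by rw [← polyMap_apply, ← polyMap_apply, hfg])

lemma polyMapC_injective (h : Function.Injective φ.f) : Function.Injective φ.polyMapC :=
  Finsupp.mapRange_injective _ (map_zero _) (baseChange_injective h)

/-- When `φ` is injective, `φ` reflects the property of being a solution. -/
lemma polyMap_mem_iff (h : Function.Injective φ.f) {f : ℕ →₀ A.V} :
    φ.polyMap f ∈ B.Msub ↔ f ∈ A.Msub := by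
  refine ⟨fun hf => ?_, φ.polyMap_mem⟩
  rw [SHSObj.mem_Msub, Dbeta_polyMap] at hf
  exact φ.polyMapC_injective h (hf.trans (map_zero _).symm)

/-- A solution for the target is lifted by lifting its value at `0`. -/
lemma polyMap_surjective (h : Function.Surjective φ.f) {g : ℕ →₀ B.V} (hg : g ∈ B.Msub) :
    ∃ f ∈ A.Msub, φ.polyMap f = g := by
  obtain ⟨v, hv⟩ := h (g 0)
  obtain ⟨m, rfl⟩ := A.ev0_surjective v
  refine ⟨m, m.2, congrArg Subtype.val
    (B.ev0_injective (a₁ := ⟨φ.polyMap m, φ.polyMap_mem m.2⟩) (a₂ := ⟨g, hg⟩) ?_)⟩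
  change φ.polyMap m 0 = g 0
  rw [polyMap_apply, ← hv]; rfl

end SHSHom

lemma map_Msub_eq {A B C : SHSObj} (φ : SHSHom A B) (ψ : SHSHom B C)
    (hφ : Function.Injective φ.f) (h : LinearMap.range φ.f = LinearMap.ker ψ.f) :
    A.Msub.map φ.polyMap = B.Msub ⊓ LinearMap.ker ψ.polyMap := by
  apply le_antisymm
  · rintro _ ⟨f, hf, rfl⟩
    refine ⟨φ.polyMap_mem hf, LinearMap.mem_ker.mpr (Finsupp.ext fun n => ?_)⟩
    rw [ψ.polyMap_apply, φ.polyMap_apply]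
    exact LinearMap.mem_ker.mp (h ▸ LinearMap.mem_range_self φ.f (f n))
  · rintro g ⟨hg, hk⟩
    have hr : ∀ n, ∃ v, φ.f v = g n := fun n => by
      have : g n ∈ LinearMap.ker ψ.f := by
        rw [LinearMap.mem_ker, ← ψ.polyMap_apply, LinearMap.mem_ker.mp hk]; rfl
      rw [← h] at this
      exact this
    choose s hs using hr
    have hs0 : ∀ n, s n ≠ 0 → n ∈ g.support := fun n hn => by
      rw [Finsupp.mem_support_iff, ← hs n]
      exact fun h0 => hn (hφ (h0.trans (map_zero _).symm))
    have hf : φ.polyMap (Finsupp.onFinset g.support s hs0) = g := by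
      ext n
      rw [φ.polyMap_apply, Finsupp.onFinset_apply, hs]
    refine ⟨_, ?_, hf⟩
    rw [SetLike.mem_coe, ← φ.polyMap_mem_iff hφ, hf]
    exact hg

/-- **Statement 1.**  `M(V,β)` with the filtrations `W`, `F` is a real mixed Hodge
structure; `M` is exact; `gr^W_n M(V,β) ≅ 𝒲_n V` as pure Hodge structures of weight
`n`; and `dim_ℝ M(V,β) = dim_ℝ V`. -/
theorem M_of_SHS_isMHS :
    -- (a)  (M(V,β), W, F) is a real mixed Hodge structure:
    (∀ A : SHSObj, IsRealMHS A.MW A.MF) ∧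
    -- (b)  M is exact: a sequence of SHS objects which is short exact on underlying
    --      vector spaces induces a short exact sequence of the M's:
    (∀ (A B C : SHSObj) (φ : SHSHom A B) (ψ : SHSHom B C),
      Function.Injective φ.f → Function.Surjective ψ.f →
      LinearMap.range φ.f = LinearMap.ker ψ.f →
        (A.Msub.map φ.polyMap ≤ B.Msub) ∧
        (B.Msub.map ψ.polyMap ≤ C.Msub) ∧
        Function.Injective (fun g : ↥A.Msub => φ.polyMap g.1) ∧
        (A.Msub.map φ.polyMap = B.Msub ⊓ LinearMap.ker ψ.polyMap) ∧
        (∀ h ∈ C.Msub, ∃ g ∈ B.Msub, ψ.polyMap g = h)) ∧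
    -- (c)  gr^W_n M(V,β) ≅ 𝒲_n V as pure Hodge structures of weight n.  (The
    --      isomorphism is recorded by a surjection W_n M(V,β) → 𝒲_n V with kernel
    --      W_{n-1} M(V,β), matching the induced Hodge filtrations.)
    (∀ (A : SHSObj) (n : ℤ), ∃ ρ : ↥(A.MW n) →ₗ[ℝ] ↥(A.calW n),
      Function.Surjective ρ ∧
      LinearMap.ker ρ = (A.MW (n - 1)).comap (A.MW n).subtype ∧
      ∀ p : ℤ, (A.MWF n p).map (LinearMap.baseChange ℂ ρ) = A.calWF n p) ∧
    -- (d)  dim_ℝ M(V,β) = dim_ℝ V: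
    (∀ A : SHSObj, Module.finrank ℝ ↥A.Msub = Module.finrank ℝ A.V) := by
  refine ⟨SHSObj.isRealMHS, fun A B C φ ψ hφ hψ h => ⟨?_, ?_, ?_, map_Msub_eq φ ψ hφ h, ?_⟩,
    fun A n => ⟨A.rho n, A.rho_surjective n, A.ker_rho n, A.map_MWF n⟩, SHSObj.finrank_Msub⟩
  · exact Submodule.map_le_iff_le_comap.mpr fun f hf => φ.polyMap_mem hf
  · exact Submodule.map_le_iff_le_comap.mpr fun f hf => ψ.polyMap_mem hf
  · exact fun f g hfg => Subtype.ext (φ.polyMap_injective hφ hfg)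
  · exact fun g hg => ψ.polyMap_surjective hψ hg

end
end

section
/- In A := ℝ[u,v,x,y]/(uy − vx − 1), let N : A → A be the unique ℝ-linear derivation with N(u) = N(v) = 0, N(x) = u, N(y) = v (well-defined since N(uy − vx − 1) = 0). Then the kernel of N is exactly the ℝ-subalgebra of A generated by the classes of u and v; moreover the ℝ-algebra map ℝ[u,v] → A is injective, so ker N is isomorphic to the polynomial ring ℝ[u,v]. -/
/-!
Inverting `u`, the relation gives `y = (1 + vx)/u`, so every `a ∈ A` satisfies
`uⁿ a = P(x)` for some `P ∈ ℝ[u,v][x]` (`exists_clear`), and `ℝ[u,v][x]` embeds in `A`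
(`rowX_injective`). On this subring `N` is `u ∂/∂x`, and `u` is a nonzerodivisor in `A`
(`u_cancel`); hence `N a = 0` forces `P' = 0`, i.e. `uⁿ a = p(u,v)`. The points
`(0, v; -1/v, 0)` of `SL₂` show that `p(0,v) = 0`, so `u` divides `p` in `ℝ[u,v]`
(`X0_dvd`), and cancelling `u` repeatedly puts `a` in `ℝ[u,v]`.

The derivation itself is the infinitesimal generator of the flow adding `t` times the first
row to the second (`derivation_exists`).
-/

/-!
# STATEMENT 7

In `A := ℝ[u,v,x,y]/(uy − vx − 1)` there is a unique `ℝ`-linear derivation `N` with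
`N u = N v = 0`, `N x = u`, `N y = v`, the kernel of `N` is exactly the `ℝ`-subalgebra
generated by (the classes of) `u` and `v`, and the `ℝ`-algebra map `ℝ[u,v] → A` is
injective, so `ker N` is isomorphic to the polynomial ring `ℝ[u,v]`.
-/

noncomputable section

open MvPolynomial

/-- The ideal `(u y - v x - 1)` in `ℝ[u,v,x,y]`; the variables `0,1,2,3` of
`MvPolynomial (Fin 4) ℝ` are `u, v, x, y` respectively. -/
def sl2Ideal : Ideal (MvPolynomial (Fin 4) ℝ) :=
  Ideal.span {X 0 * X 3 - X 1 * X 2 - 1}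

/-- `A = O(SL₂) = ℝ[u,v,x,y]/(uy - vx - 1)`. -/
def OSL2 : Type := MvPolynomial (Fin 4) ℝ ⧸ sl2Ideal

instance : CommRing OSL2 := Ideal.Quotient.commRing sl2Ideal
instance : Algebra ℝ OSL2 := Ideal.Quotient.algebra ℝ

/-- The classes of `u, v, x, y` in `A`. -/
def uC : OSL2 := Ideal.Quotient.mk sl2Ideal (X 0)
def vC : OSL2 := Ideal.Quotient.mk sl2Ideal (X 1)
def xC : OSL2 := Ideal.Quotient.mk sl2Ideal (X 2)
def yC : OSL2 := Ideal.Quotient.mk sl2Ideal (X 3)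

/-- The `ℝ`-algebra homomorphism `ℝ[u,v] → A` sending the two variables to the
classes of `u` and `v`. -/
def row1Map : MvPolynomial (Fin 2) ℝ →ₐ[ℝ] OSL2 :=
  MvPolynomial.aeval ![uC, vC]

/-- The quotient map `ℝ[u,v,x,y] → A`, as an algebra homomorphism. -/
def quotMap : MvPolynomial (Fin 4) ℝ →ₐ[ℝ] OSL2 := Ideal.Quotient.mkₐ ℝ sl2Ideal

lemma quotMap_surjective : Function.Surjective quotMap :=
  Ideal.Quotient.mkₐ_surjective ℝ sl2Ideal

lemma quotMap_eq_zero {p : MvPolynomial (Fin 4) ℝ} :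
    quotMap p = 0 ↔ (X 0 * X 3 - X 1 * X 2 - 1) ∣ p := by
  rw [← Ideal.mem_span_singleton]
  exact Ideal.Quotient.eq_zero_iff_mem

lemma quotMap_X (i : Fin 4) : quotMap (X i) = ![uC, vC, xC, yC] i := by
  fin_cases i <;> rfl

lemma det_eq_one : uC * yC = 1 + vC * xC := by
  have h : quotMap (X 0 * X 3 - X 1 * X 2 - 1) = 0 := quotMap_eq_zero.2 dvd_rfl
  simp only [map_sub, map_mul, map_one, quotMap_X] at h
  simp at h
  linear_combination h

lemma OSL2_induction {P : OSL2 → Prop} (hC : ∀ r : ℝ, P (algebraMap ℝ OSL2 r))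
    (hadd : ∀ a b, P a → P b → P (a + b)) (hu : ∀ a, P a → P (a * uC))
    (hv : ∀ a, P a → P (a * vC)) (hx : ∀ a, P a → P (a * xC))
    (hy : ∀ a, P a → P (a * yC)) (a : OSL2) : P a := by
  obtain ⟨p, rfl⟩ := quotMap_surjective a
  induction p using MvPolynomial.induction_on with
  | C r =>
    have : quotMap (C r) = algebraMap ℝ OSL2 r := quotMap.commutes r
    rw [this]; exact hC r
  | add p q hp hq => rw [map_add]; exact hadd _ _ hp hq
  | mul_X p i hp =>
    rw [map_mul, quotMap_X]
    fin_cases i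
    · exact hu _ hp
    · exact hv _ hp
    · exact hx _ hp
    · exact hy _ hp

/-- The universal property of `A`: a matrix `(a b; c d)` of determinant one over an
`ℝ`-algebra `T` is a `T`-point of `SL₂`. -/
lemma exists_point {T : Type*} [CommRing T] [Algebra ℝ T] (a b c d : T)
    (h : a * d - b * c = 1) :
    ∃ f : OSL2 →ₐ[ℝ] T, f uC = a ∧ f vC = b ∧ f xC = c ∧ f yC = d := by
  have h0 : ∀ p ∈ sl2Ideal, aeval (R := ℝ) ![a, b, c, d] p = 0 := by
    intro p hp
    obtain ⟨q, rfl⟩ := Ideal.mem_span_singleton.1 hp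
    simp [h]
  have hX : ∀ i, (Ideal.Quotient.liftₐ sl2Ideal (aeval (R := ℝ) ![a, b, c, d]) h0)
      (Ideal.Quotient.mk sl2Ideal (X i)) = ![a, b, c, d] i := by
    intro i
    exact aeval_X _ _
  exact ⟨Ideal.Quotient.liftₐ sl2Ideal (aeval ![a, b, c, d]) h0, hX 0, hX 1, hX 2, hX 3⟩

lemma derivation_unique (N N' : Derivation ℝ OSL2 OSL2) (hu : N uC = N' uC)
    (hv : N vC = N' vC) (hx : N xC = N' xC) (hy : N yC = N' yC) : N = N' := by
  ext a
  induction a using OSL2_induction with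
  | hC r => simp
  | hadd a b ha hb => simp [ha, hb]
  | hu a ha => simp [ha, hu]
  | hv a ha => simp [ha, hv]
  | hx a ha => simp [ha, hx]
  | hy a ha => simp [ha, hy]

/-- `N` is the linear term in `t` of the flow `(u, v; x, y) ↦ (u, v; x + tu, y + tv)`, which
is a point of `SL₂` over `A[t]`. -/
lemma derivation_exists :
    ∃ N : Derivation ℝ OSL2 OSL2, N uC = 0 ∧ N vC = 0 ∧ N xC = uC ∧ N yC = vC := by
  obtain ⟨f, hu, hv, hx, hy⟩ := exists_point (T := Polynomial OSL2)
    (Polynomial.C uC) (Polynomial.C vC)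
    (Polynomial.C xC + Polynomial.C uC * Polynomial.X)
    (Polynomial.C yC + Polynomial.C vC * Polynomial.X) (by
      have h := congrArg Polynomial.C det_eq_one
      simp only [map_mul, map_add, map_one] at h
      linear_combination h)
  have hfst : ∀ a, (f a).coeff 0 = a := by
    intro a
    induction a using OSL2_induction with
    | hC r => rw [f.commutes, Polynomial.algebraMap_apply, Polynomial.coeff_C_zero]
    | hadd a b ha hb => simp [ha, hb]
    | hu a ha => simp [ha, hu]
    | hv a ha => simp [ha, hv]
    | hx a ha => simp [ha, hx, Polynomial.mul_coeff_zero]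
    | hy a ha => simp [ha, hy, Polynomial.mul_coeff_zero]
  let L : OSL2 →ₗ[ℝ] OSL2 :=
    { toFun := fun a => (f a).coeff 1
      map_add' := fun a b => by simp
      map_smul' := fun r a => by simp }
  have hL : ∀ a, L a = (f a).coeff 1 := fun _ => rfl
  let N : Derivation ℝ OSL2 OSL2 :=
    { toLinearMap := L
      map_one_eq_zero' := by
        rw [hL, map_one, Polynomial.coeff_one, if_neg one_ne_zero]
      leibniz' := fun a b => by
        simp only [hL, map_mul, Polynomial.mul_coeff_one, hfst, smul_eq_mul]
        ring }
  have hN : ∀ a, N a = (f a).coeff 1 := fun _ => rfl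
  exact ⟨N, by simp [hN, hu], by simp [hN, hv],
    by simp [hN, hx, Polynomial.coeff_C], by simp [hN, hy, Polynomial.coeff_C]⟩

/-- Modulo `u` the relation becomes `-vx - 1`, which is nonzero, so the prime `u` of
`ℝ[u,v,x,y]` stays a nonzerodivisor in `A`. -/
lemma u_cancel {a : OSL2} (h : uC * a = 0) : a = 0 := by
  obtain ⟨p, rfl⟩ := quotMap_surjective a
  have h' : quotMap (X 0 * p) = 0 := by rw [map_mul, quotMap_X]; exact h
  obtain ⟨q, hq⟩ := quotMap_eq_zero.1 h'
  have hprime : Prime (X 0 : MvPolynomial (Fin 4) ℝ) := MvPolynomial.X_prime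
  have hnd : ¬ (X 0 : MvPolynomial (Fin 4) ℝ) ∣ X 0 * X 3 - X 1 * X 2 - 1 := by
    rintro ⟨r, hr⟩
    have := congrArg (eval (0 : Fin 4 → ℝ)) hr
    simp at this
  obtain ⟨r, rfl⟩ := (hprime.dvd_or_dvd (Dvd.intro p hq)).resolve_left hnd
  refine quotMap_eq_zero.2 ⟨r, mul_left_cancel₀ hprime.ne_zero ?_⟩
  rw [hq]; ring

/-- The map `ℝ[u,v][x] → A`. -/
def rowX : Polynomial (MvPolynomial (Fin 2) ℝ) →+* OSL2 :=
  Polynomial.eval₂RingHom row1Map.toRingHom xC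

lemma row1Map_X0 : row1Map (X 0) = uC := by simp [row1Map]
lemma row1Map_X1 : row1Map (X 1) = vC := by simp [row1Map]
lemma rowX_C (p : MvPolynomial (Fin 2) ℝ) : rowX (Polynomial.C p) = row1Map p := by
  simp [rowX]
lemma rowX_X : rowX Polynomial.X = xC := by simp [rowX]

/-- On the open set `u ≠ 0` the functions `u, v, x` are coordinates of `SL₂`, since
`y = (1 + vx) / u` there. -/
lemma rowX_injective : Function.Injective rowX := by
  let K := FractionRing (Polynomial (MvPolynomial (Fin 2) ℝ))
  let j : Polynomial (MvPolynomial (Fin 2) ℝ) →+* K := algebraMap _ K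
  have hj : Function.Injective j := IsFractionRing.injective _ _
  let U : K := j (Polynomial.C (X 0))
  let V : K := j (Polynomial.C (X 1))
  have hU : U ≠ 0 := by
    intro h
    have := hj (h.trans (map_zero j).symm)
    rw [Polynomial.C_eq_zero] at this
    exact X_ne_zero 0 this
  obtain ⟨f, hu, hv, hx, -⟩ := exists_point (T := K) U V (j Polynomial.X)
    ((1 + V * j Polynomial.X) / U) (by rw [mul_div_cancel₀ _ hU, add_sub_cancel_right])
  have hf : (f : OSL2 →+* K).comp rowX = j := by
    refine Polynomial.ringHom_ext' ?_ ?_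
    · refine MvPolynomial.ringHom_ext ?_ ?_
      · intro r
        have h1 : row1Map (C r) = algebraMap ℝ OSL2 r := row1Map.commutes r
        have h2 : j (Polynomial.C (C r)) = algebraMap ℝ K r := by
          rw [IsScalarTower.algebraMap_apply ℝ (Polynomial (MvPolynomial (Fin 2) ℝ)) K]
          rfl
        simp [rowX_C, h1, h2]
      · intro i
        fin_cases i
        · simp [rowX_C, row1Map_X0, hu, U]
        · simp [rowX_C, row1Map_X1, hv, V]
    · simp [rowX_X, hx]
  refine Function.Injective.of_comp (f := f) ?_
  rw [← hf] at hj
  exact hj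

lemma row1Map_injective : Function.Injective row1Map := by
  intro p q h
  rw [← rowX_C, ← rowX_C] at h
  exact Polynomial.C_injective (rowX_injective h)

/-- `A[1/u]` is generated by `u, v, x` and `1/u`. -/
lemma exists_clear (a : OSL2) : ∃ n P, uC ^ n * a = rowX P := by
  induction a using OSL2_induction with
  | hC r =>
    refine ⟨0, Polynomial.C (C r), ?_⟩
    rw [rowX_C, pow_zero, one_mul]
    exact (row1Map.commutes r).symm
  | hadd a b ha hb =>
    obtain ⟨n, P, hP⟩ := ha
    obtain ⟨m, Q, hQ⟩ := hb
    refine ⟨n + m, Polynomial.C (X 0) ^ m * P + Polynomial.C (X 0) ^ n * Q, ?_⟩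
    simp only [map_add, map_mul, map_pow, rowX_C, row1Map_X0, ← hP, ← hQ]
    ring
  | hu a ha =>
    obtain ⟨n, P, hP⟩ := ha
    refine ⟨n, P * Polynomial.C (X 0), ?_⟩
    simp only [map_mul, rowX_C, row1Map_X0, ← hP]
    ring
  | hv a ha =>
    obtain ⟨n, P, hP⟩ := ha
    refine ⟨n, P * Polynomial.C (X 1), ?_⟩
    simp only [map_mul, rowX_C, row1Map_X1, ← hP]
    ring
  | hx a ha =>
    obtain ⟨n, P, hP⟩ := ha
    refine ⟨n, P * Polynomial.X, ?_⟩
    simp only [map_mul, rowX_X, ← hP]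
    ring
  | hy a ha =>
    obtain ⟨n, P, hP⟩ := ha
    refine ⟨n + 1, P * (1 + Polynomial.C (X 1) * Polynomial.X), ?_⟩
    simp only [map_mul, map_add, map_one, rowX_X, rowX_C, row1Map_X1, ← hP, ← det_eq_one]
    ring

/-- If `p(u,v)` is divisible by `u` in `A`, it is so in `ℝ[u,v]`: the line `u = 0` in `𝔸²`
minus the origin lies in the image of `SL₂`. -/
lemma X0_dvd {p : MvPolynomial (Fin 2) ℝ} {a : OSL2} (h : uC * a = row1Map p) :
    X 0 ∣ p := by
  -- `p₀ = p(0, v)`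
  let p₀ : MvPolynomial (Fin 2) ℝ := aeval ![0, X 1] p
  have hdvd : X 0 ∣ p - p₀ := by
    rw [← Ideal.mem_span_singleton, ← Ideal.Quotient.eq]
    change _ = ((Ideal.Quotient.mkₐ ℝ (Ideal.span {X 0})).comp
      (aeval ![0, (X 1 : MvPolynomial (Fin 2) ℝ)])) p
    change (Ideal.Quotient.mkₐ ℝ (Ideal.span {X 0})) p = _
    congr 1
    refine MvPolynomial.algHom_ext fun i => ?_
    fin_cases i
    · simp
    · simp
  have hp₀ : X 1 * p₀ = 0 := by
    refine MvPolynomial.funext fun s => ?_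
    rw [map_mul, map_zero, eval_X]
    rcases eq_or_ne (s 1) 0 with hs | hs
    · rw [hs, zero_mul]
    obtain ⟨f, hu, hv, -, -⟩ := exists_point (T := ℝ) 0 (s 1) (-(s 1)⁻¹) 0 (by simp [hs])
    have h1 : (f.comp row1Map) p = 0 := by
      rw [AlgHom.comp_apply, ← h, map_mul, hu, zero_mul]
    have h2 : (aeval s).comp (aeval ![0, X 1]) = f.comp row1Map := by
      refine MvPolynomial.algHom_ext fun i => ?_
      fin_cases i
      · simp [row1Map_X0, hu]
      · simp [row1Map_X1, hv]
    have h3 : eval s p₀ = 0 := by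
      rw [← h1, ← h2, ← MvPolynomial.coe_aeval_eq_eval]
      rfl
    rw [h3, mul_zero]
  have : p₀ = 0 := (mul_eq_zero.1 hp₀).resolve_left (X_ne_zero 1)
  rwa [this, sub_zero] at hdvd

lemma mem_range_of_pow_mul {n : ℕ} {a : OSL2} {p : MvPolynomial (Fin 2) ℝ}
    (h : uC ^ n * a = row1Map p) : ∃ q, row1Map q = a := by
  induction n generalizing p with
  | zero => exact ⟨p, by rw [← h, pow_zero, one_mul]⟩
  | succ n ih =>
    rw [pow_succ', mul_assoc] at h
    obtain ⟨q, rfl⟩ := X0_dvd h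
    rw [map_mul, row1Map_X0] at h
    refine ih (p := q) (sub_eq_zero.1 (u_cancel ?_))
    rw [mul_sub, h, sub_self]

lemma N_row1Map {N : Derivation ℝ OSL2 OSL2} (hu : N uC = 0) (hv : N vC = 0)
    (p : MvPolynomial (Fin 2) ℝ) : N (row1Map p) = 0 := by
  induction p using MvPolynomial.induction_on with
  | C r =>
    have : row1Map (C r) = algebraMap ℝ OSL2 r := row1Map.commutes r
    rw [this, N.map_algebraMap]
  | add p q hp hq => rw [map_add, map_add, hp, hq, add_zero]
  | mul_X p i hp =>
    rw [map_mul, N.leibniz, hp]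
    fin_cases i
    · simp [row1Map_X0, hu]
    · simp [row1Map_X1, hv]

/-- On `ℝ[u,v][x]` the derivation is `u ∂/∂x`. -/
lemma N_rowX {N : Derivation ℝ OSL2 OSL2} (hu : N uC = 0) (hv : N vC = 0) (hx : N xC = uC)
    (P : Polynomial (MvPolynomial (Fin 2) ℝ)) :
    N (rowX P) = uC * rowX (Polynomial.derivative P) := by
  induction P using Polynomial.induction_on' with
  | add P Q hP hQ => simp only [map_add, hP, hQ, mul_add]
  | monomial n p =>
    rw [← Polynomial.C_mul_X_pow_eq_monomial, Polynomial.derivative_C_mul_X_pow]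
    simp only [map_mul, map_pow, rowX_C, rowX_X, N.leibniz, N.leibniz_pow,
      N_row1Map hu hv, hx, smul_eq_mul, nsmul_eq_mul, map_natCast, mul_zero, add_zero]
    ring

lemma N_eq_zero_iff {N : Derivation ℝ OSL2 OSL2} (hu : N uC = 0) (hv : N vC = 0)
    (hx : N xC = uC) (a : OSL2) : N a = 0 ↔ ∃ q, row1Map q = a := by
  constructor
  · intro ha
    obtain ⟨n, P, hP⟩ := exists_clear a
    have h1 : N (rowX P) = 0 := by
      rw [← hP, N.leibniz, N.leibniz_pow, ha, hu]
      simp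
    rw [N_rowX hu hv hx] at h1
    have h2 : Polynomial.derivative P = 0 :=
      rowX_injective ((u_cancel h1).trans (map_zero rowX).symm)
    rw [Polynomial.eq_C_of_derivative_eq_zero h2, rowX_C] at hP
    exact mem_range_of_pow_mul hP
  · rintro ⟨q, rfl⟩
    exact N_row1Map hu hv q

theorem ker_N_eq_adjoin_uv :
    -- `N` is well defined (it exists) and unique:
    (∃! N : Derivation ℝ OSL2 OSL2, N uC = 0 ∧ N vC = 0 ∧ N xC = uC ∧ N yC = vC) ∧
    -- its kernel is exactly the `ℝ`-subalgebra of `A` generated by `u` and `v`: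
    (∀ N : Derivation ℝ OSL2 OSL2,
      N uC = 0 → N vC = 0 → N xC = uC → N yC = vC →
      ∀ a : OSL2, N a = 0 ↔ a ∈ Algebra.adjoin ℝ ({uC, vC} : Set OSL2)) ∧
    -- and the algebra map `ℝ[u,v] → A` is injective, so that the kernel is
    -- isomorphic to the polynomial ring `ℝ[u,v]`:
    Function.Injective row1Map := by
  refine ⟨?_, ?_, row1Map_injective⟩
  · obtain ⟨N, hu, hv, hx, hy⟩ := derivation_exists
    refine ⟨N, ⟨hu, hv, hx, hy⟩, ?_⟩
    rintro N' ⟨hu', hv', hx', hy'⟩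
    exact derivation_unique N' N (hu'.trans hu.symm) (hv'.trans hv.symm)
      (hx'.trans hx.symm) (hy'.trans hy.symm)
  · intro N hu hv hx _ a
    have hr : Algebra.adjoin ℝ ({uC, vC} : Set OSL2) = row1Map.range := by
      rw [row1Map, ← Algebra.adjoin_range_eq_range_aeval]
      congr 1
      simp [Set.pair_comm]
    rw [hr, N_eq_zero_iff hu hv hx]
    rfl

end
end

section
/- The ring A := ℝ[u,v,x,y]/(uy − vx − 1) is flat as a module over the polynomial ring ℝ[u,v], via the ℝ-algebra homomorphism ℝ[u,v] → A sending u, v to their classes. -/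
/-!
The map `ℝ[u,v] → O(SL₂)` is smooth, and smooth algebras are flat (`Algebra.Smooth.flat`).

Finite presentation over `ℝ[u,v]` is inherited from finite presentation over `ℝ`. Formal smoothness
is checked by lifting along a square-zero ideal `I` of an `ℝ[u,v]`-algebra `B`: an algebra map
`O(SL₂) → B/I` is a solution of `u y - v x = 1` in `B/I`, and any lift `(x₀, y₀)` of it to `B`
satisfies `u y₀ - v x₀ = 1 + e` with `e ∈ I`, `e² = 0`. Since the equation is linear in `(x, y)`,
rescaling by `(1 + e)⁻¹ = 1 - e`, which is `1` modulo `I`, gives an exact solution in `B`.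
-/

/-!
# STATEMENT 9

The ring `A := ℝ[u,v,x,y]/(u y − v x − 1)` (the coordinate ring of `SL₂` over `ℝ`)
is flat as a module over the polynomial ring `ℝ[u,v]`, via the `ℝ`-algebra map
`ℝ[u,v] → A` sending `u`, `v` to their classes (the first-row projection
`row₁ : SL₂ → C = 𝔸²`).
-/

noncomputable section

open MvPolynomial

/-- Square-zero lifting of solutions of `u y - v x = 1` with `u`, `v` fixed. -/
lemma exists_lift_first_row {B : Type*} [CommRing B] (I : Ideal B) (hI : I ^ 2 = ⊥)
    (u v : B) (x y : B ⧸ I)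
    (h : Ideal.Quotient.mk I u * y - Ideal.Quotient.mk I v * x = 1) :
    ∃ x' y' : B, u * y' - v * x' = 1 ∧
      Ideal.Quotient.mk I x' = x ∧ Ideal.Quotient.mk I y' = y := by
  obtain ⟨x₀, rfl⟩ := Ideal.Quotient.mk_surjective x
  obtain ⟨y₀, rfl⟩ := Ideal.Quotient.mk_surjective y
  obtain ⟨e, he⟩ : ∃ e, e = u * y₀ - v * x₀ - 1 := ⟨_, rfl⟩
  have hmk : Ideal.Quotient.mk I e = 0 := by
    rw [he, map_sub, map_sub, map_mul, map_mul, map_one, h, sub_self]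
  have heI : e ∈ I := Ideal.Quotient.eq_zero_iff_mem.mp hmk
  have he2 : e ^ 2 = 0 := by
    have := Ideal.pow_mem_pow heI 2
    rwa [hI, Ideal.mem_bot] at this
  refine ⟨x₀ * (1 - e), y₀ * (1 - e), ?_, by simp [hmk], by simp [hmk]⟩
  linear_combination (-(1 - e)) * he - he2

/-- The algebra structure of `O(SL₂)` over `ℝ[u,v]` given by `row1Map`. -/
@[reducible] def row1Algebra : Algebra (MvPolynomial (Fin 2) ℝ) OSL2 :=
  row1Map.toRingHom.toAlgebra

attribute [local instance] row1Algebra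

lemma algebraMap_row1_X_zero : algebraMap (MvPolynomial (Fin 2) ℝ) OSL2 (X 0) = uC := by
  change row1Map (X 0) = uC
  simp [row1Map]

lemma algebraMap_row1_X_one : algebraMap (MvPolynomial (Fin 2) ℝ) OSL2 (X 1) = vC := by
  change row1Map (X 1) = vC
  simp [row1Map]

lemma algebraMap_row1_C (r : ℝ) :
    algebraMap (MvPolynomial (Fin 2) ℝ) OSL2 (C r) = Ideal.Quotient.mk sl2Ideal (C r) :=
  row1Map.commutes r

lemma formallySmooth_row1 : Algebra.FormallySmooth (MvPolynomial (Fin 2) ℝ) OSL2 := by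
  refine .of_comp_surjective fun B _ _ I hI f => ?_
  have hf (p : MvPolynomial (Fin 2) ℝ) :
      f (algebraMap _ OSL2 p) = Ideal.Quotient.mk I (algebraMap _ B p) := f.commutes p
  have hfu := hf (X 0)
  have hfv := hf (X 1)
  rw [algebraMap_row1_X_zero] at hfu
  rw [algebraMap_row1_X_one] at hfv
  let q : MvPolynomial (Fin 4) ℝ →+* OSL2 := Ideal.Quotient.mk sl2Ideal
  have hrel : uC * q (X 3) - vC * q (X 2) = 1 := by
    have h0 : q (X 0 * X 3 - X 1 * X 2 - 1) = 0 :=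
      Ideal.Quotient.eq_zero_iff_mem.mpr (Ideal.subset_span rfl)
    rw [map_sub, map_sub, map_mul, map_mul, map_one] at h0
    exact sub_eq_zero.mp h0
  obtain ⟨x', y', hxy, hx, hy⟩ := exists_lift_first_row I hI
    (algebraMap (MvPolynomial (Fin 2) ℝ) B (X 0)) (algebraMap (MvPolynomial (Fin 2) ℝ) B (X 1))
    (f (q (X 2))) (f (q (X 3)))
    (by rw [← hfu, ← hfv, ← map_mul, ← map_mul, ← map_sub, hrel, map_one])
  let g₀ : MvPolynomial (Fin 4) ℝ →+* B :=
    eval₂Hom ((algebraMap (MvPolynomial (Fin 2) ℝ) B).comp C)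
      ![algebraMap (MvPolynomial (Fin 2) ℝ) B (X 0),
        algebraMap (MvPolynomial (Fin 2) ℝ) B (X 1), x', y']
  have hg₀ : ∀ a ∈ sl2Ideal, g₀ a = 0 := by
    intro a ha
    have hle : sl2Ideal ≤ RingHom.ker g₀ := by
      rw [sl2Ideal, Ideal.span_singleton_le_iff_mem, RingHom.mem_ker]
      simp [g₀, hxy]
    exact hle ha
  let g : OSL2 →+* B := Ideal.Quotient.lift sl2Ideal g₀ hg₀
  have hgq (a : MvPolynomial (Fin 4) ℝ) : g (q a) = g₀ a := Ideal.Quotient.lift_mk _ _ _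
  have hgR : g.comp (algebraMap (MvPolynomial (Fin 2) ℝ) OSL2) = algebraMap _ B := by
    refine MvPolynomial.ringHom_ext (fun r => ?_) (fun i => ?_)
    · rw [RingHom.comp_apply, algebraMap_row1_C]
      exact (hgq _).trans (by simp [g₀])
    · fin_cases i
      · change g (algebraMap (MvPolynomial (Fin 2) ℝ) OSL2 (X 0)) = algebraMap _ B (X 0)
        rw [algebraMap_row1_X_zero]
        exact (hgq (X 0)).trans (by simp [g₀])
      · change g (algebraMap (MvPolynomial (Fin 2) ℝ) OSL2 (X 1)) = algebraMap _ B (X 1)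
        rw [algebraMap_row1_X_one]
        exact (hgq (X 1)).trans (by simp [g₀])
  refine ⟨{ g with commutes' := fun p => congr($hgR p) }, ?_⟩
  -- Two ring maps out of `O(SL₂)` agree once they agree on the images of constants and variables.
  have key : ((Ideal.Quotient.mk I).comp g).comp q = (f : OSL2 →+* B ⧸ I).comp q := by
    refine MvPolynomial.ringHom_ext (fun r => ?_) (fun i => ?_)
    · change Ideal.Quotient.mk I (g (q (C r))) = f (q (C r))
      rw [hgq, show q (C r) = _ from (algebraMap_row1_C r).symm, hf]
      simp [g₀]
    · change Ideal.Quotient.mk I (g (q (X i))) = f (q (X i))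
      rw [hgq]
      fin_cases i
      · exact (by simp [g₀] : _ = _).trans hfu.symm
      · exact (by simp [g₀] : _ = _).trans hfv.symm
      · exact (by simp [g₀] : _ = _).trans hx
      · exact (by simp [g₀] : _ = _).trans hy
  refine AlgHom.ext fun a => ?_
  obtain ⟨b, rfl⟩ := Ideal.Quotient.mk_surjective a
  exact congr($key b)

lemma finitePresentation_row1 :
    Algebra.FinitePresentation (MvPolynomial (Fin 2) ℝ) OSL2 := by
  have : Algebra.FinitePresentation ℝ OSL2 :=
    Algebra.FinitePresentation.quotient (A := MvPolynomial (Fin 4) ℝ) (I := sl2Ideal)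
      ⟨{X 0 * X 3 - X 1 * X 2 - 1}, by simp [sl2Ideal]⟩
  have : IsScalarTower ℝ (MvPolynomial (Fin 2) ℝ) OSL2 :=
    IsScalarTower.of_algebraMap_eq fun r => (row1Map.commutes r).symm
  exact Algebra.FinitePresentation.of_restrict_scalars_finitePresentation ℝ _ _

/-- `O(SL₂)` is flat over `O(C) = ℝ[u,v]`, for the module structure
given by the ring map `row₁^♯ : ℝ[u,v] → O(SL₂)`. -/
theorem OSL2_flat_over_row1 :
    @Module.Flat (MvPolynomial (Fin 2) ℝ) OSL2 _ _
      (Module.compHom OSL2 row1Map.toRingHom) := by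
  have : Algebra.Smooth (MvPolynomial (Fin 2) ℝ) OSL2 :=
    { formallySmooth := formallySmooth_row1
      finitePresentation := finitePresentation_row1 }
  exact Algebra.Smooth.flat (MvPolynomial (Fin 2) ℝ) OSL2

end
end

section
/- Let V be a finite-dimensional complex vector space with a direct sum decomposition V = ⊕_{(p,q)∈ℤ²} V^{pq} and an antilinear involution σ : V → V with σ(V^{pq}) = V^{qp}. Let d be a ℂ-linear automorphism of V such that σ∘d∘σ = d^{−1} and (d − id)(V^{pq}) ⊆ ⊕_{r<p, s<q} V^{rs} for all p,q. Then there exists a unique ℂ-linear automorphism e of V satisfying e² = d, σ∘e∘σ = e^{−1}, and (e − id)(V^{pq}) ⊆ ⊕_{r<p, s<q} V^{rs} for all p,q. -/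
/-!
# STATEMENT 10

Let `V` be a finite-dimensional complex vector space with a direct sum decomposition
`V = ⊕_{(p,q)} V^{pq}` and an antilinear involution `σ` with `σ(V^{pq}) = V^{qp}`.
Let `d` be a `ℂ`-linear automorphism of `V` with `σ ∘ d ∘ σ = d⁻¹` and
`(d − id)(V^{pq}) ⊆ ⊕_{r<p, s<q} V^{rs}`.  Then there is a unique `ℂ`-linear
automorphism `e` of `V` with `e² = d`, `σ ∘ e ∘ σ = e⁻¹` and
`(e − id)(V^{pq}) ⊆ ⊕_{r<p, s<q} V^{rs}` (the operator `d^{1/2}` of Remark cfRMHS).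
-/

/-!
Write `D` for `d` and `N = D - 1`. The endomorphisms that strictly lower both indices form a
non-unital algebra, closed under conjugation by `σ`, and each of them is nilpotent, because only
finitely many `V^{pq}` are nonzero (`Lowers.isNilpotent`). Truncating the Taylor series of
`√(1 + X)` gives a polynomial `q` with `(1 + X q)² ≡ 1 + X` modulo a high power of `X`
(`exists_sqrt_one_add_X`), so `E = 1 + N q(N)` is a type-lowering square root of `D`.

Two commuting operators `a`, `b` that are type-lowering perturbations of `1` and have equal squares
coincide, since `(a + b) (a - b) = 0` and `a + b` is `2` plus a nilpotent
(`eq_of_mul_self_eq`). Any square root of `D` commutes with `D`, hence with `E`, which gives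
uniqueness. The operator `F = σ E σ` satisfies `F² = D⁻¹`, so it too commutes with `D` and `E`,
and `(F E)² = 1 = 1²` forces `F E = 1`.
-/

noncomputable section

open DirectSum

variable {V : Type} [AddCommGroup V] [Module ℂ V]

/-- The subspace `⊕_{r < p, s < q} V^{rs}`. -/
def strictlyLower (grading : ℤ × ℤ → Submodule ℂ V) (p q : ℤ) : Submodule ℂ V :=
  ⨆ (r : ℤ) (_ : r < p) (s : ℤ) (_ : s < q), grading (r, s)

/-- The endomorphism `n` strictly lowers both indices: it maps each `V^{pq}` into
`⊕_{r < p, s < q} V^{rs}`. -/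
def Lowers (grading : ℤ × ℤ → Submodule ℂ V) (n : Module.End ℂ V) : Prop :=
  ∀ p q : ℤ, ∀ x ∈ grading (p, q), n x ∈ strictlyLower grading p q

lemma grading_le_strictlyLower (grading : ℤ × ℤ → Submodule ℂ V) {p q r s : ℤ}
    (hr : r < p) (hs : s < q) : grading (r, s) ≤ strictlyLower grading p q :=
  le_iSup₂_of_le r hr (le_iSup₂_of_le s hs le_rfl)

lemma strictlyLower_le {grading : ℤ × ℤ → Submodule ℂ V} {p q : ℤ} {W : Submodule ℂ V}
    (h : ∀ r < p, ∀ s < q, grading (r, s) ≤ W) : strictlyLower grading p q ≤ W :=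
  iSup₂_le fun r hr => iSup₂_le fun s hs => h r hr s hs

lemma strictlyLower_mono (grading : ℤ × ℤ → Submodule ℂ V) {p q r s : ℤ}
    (hr : r ≤ p) (hs : s ≤ q) : strictlyLower grading r s ≤ strictlyLower grading p q :=
  strictlyLower_le fun _ h₁ _ h₂ =>
    grading_le_strictlyLower grading (h₁.trans_le hr) (h₂.trans_le hs)

namespace Lowers

variable {grading : ℤ × ℤ → Submodule ℂ V} {m n : Module.End ℂ V}

lemma add (hm : Lowers grading m) (hn : Lowers grading n) : Lowers grading (m + n) :=
  fun p q x hx => Submodule.add_mem _ (hm p q x hx) (hn p q x hx)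

lemma smul (c : ℂ) (hn : Lowers grading n) : Lowers grading (c • n) :=
  fun p q x hx => Submodule.smul_mem _ c (hn p q x hx)

lemma mul (hm : Lowers grading m) (hn : Lowers grading n) : Lowers grading (m * n) := by
  intro p q x hx
  have h : strictlyLower grading p q ≤ (strictlyLower grading p q).comap m :=
    strictlyLower_le fun r hr s hs y hy =>
      strictlyLower_mono grading hr.le hs.le (hm r s y hy)
  exact h (hn p q x hx)

lemma pow_succ (hn : Lowers grading n) (k : ℕ) : Lowers grading (n ^ (k + 1)) := by
  induction k with
  | zero => simpa using hn
  | succ k ih => rw [_root_.pow_succ]; exact ih.mul hn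

lemma mul_aeval (hn : Lowers grading n) (P : Polynomial ℂ) :
    Lowers grading (n * Polynomial.aeval n P) := by
  induction P using Polynomial.induction_on' with
  | add P Q hP hQ => rw [map_add, mul_add]; exact hP.add hQ
  | monomial k c =>
    rw [Polynomial.aeval_monomial, ← Algebra.smul_def, mul_smul_comm, ← _root_.pow_succ']
    exact (hn.pow_succ k).smul c

/-- Type-lowering operators are nilpotent: `n` maps the part of first index `≤ t` into the part of
first index `≤ t - 1`, and only finitely many first indices occur. -/
lemma isNilpotent [FiniteDimensional ℂ V] (hinternal : DirectSum.IsInternal grading)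
    (hn : Lowers grading n) : IsNilpotent n := by
  have hfin : {i | grading i ≠ ⊥}.Finite :=
    WellFoundedGT.finite_ne_bot_of_iSupIndep hinternal.submodule_iSupIndep
  let G : ℤ → Submodule ℂ V := fun t => ⨆ (i : ℤ × ℤ) (_ : i.1 ≤ t), grading i
  have hstep (t : ℤ) : G t ≤ (G (t - 1)).comap n := by
    refine iSup₂_le fun i hi x hx => ?_
    have h : strictlyLower grading i.1 i.2 ≤ G (t - 1) :=
      strictlyLower_le fun r hr s _ => le_iSup₂_of_le (r, s) (by simp only; omega) le_rfl
    exact h (hn i.1 i.2 x hx)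
  have hpow (t : ℤ) (k : ℕ) : ∀ x ∈ G t, (n ^ k) x ∈ G (t - k) := by
    induction k with
    | zero => simp
    | succ k ih =>
      intro x hx
      rw [_root_.pow_succ', Module.End.mul_apply]
      have := hstep _ (ih x hx)
      rwa [Submodule.mem_comap, sub_sub, ← Nat.cast_succ] at this
  obtain ⟨b, hb⟩ := (hfin.image Prod.fst).bddAbove
  obtain ⟨a, ha⟩ := (hfin.image Prod.fst).bddBelow
  have htop : G b = ⊤ := by
    rw [eq_top_iff, ← hinternal.submodule_iSup_eq_top]
    refine iSup_le fun i => ?_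
    by_cases hi : grading i = ⊥
    · simp [hi]
    · exact le_iSup₂_of_le i (hb ⟨i, hi, rfl⟩) le_rfl
  have hbot (t : ℤ) (ht : t < a) : G t = ⊥ := by
    refine eq_bot_iff.2 (iSup₂_le fun i hit => ?_)
    by_contra hi
    have := ha ⟨i, fun h => hi h.le, rfl⟩
    omega
  refine ⟨(b - a).toNat + 1, LinearMap.ext fun x => ?_⟩
  have hx := hpow b ((b - a).toNat + 1) x (htop ▸ Submodule.mem_top)
  rw [hbot _ (by push_cast; omega)] at hx
  simpa using hx

lemma conj (hn : Lowers grading n) (σ : V →ₛₗ[starRingEnd ℂ] V)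
    (hσgr : ∀ p q : ℤ, ∀ x ∈ grading (p, q), σ x ∈ grading (q, p)) :
    Lowers grading (σ.comp (n.comp σ) : V →ₗ[ℂ] V) := by
  intro p q x hx
  have h : strictlyLower grading q p ≤ (strictlyLower grading p q).comap σ :=
    strictlyLower_le fun r hr s hs y hy =>
      grading_le_strictlyLower grading hs hr (hσgr r s y hy)
  exact h (hn q p _ (hσgr p q x hx))

end Lowers

/-- There is a polynomial with constant term `1` whose square is `1 + X` modulo `X ^ (k + 1)`. -/
lemma exists_sqrt_one_add_X (k : ℕ) : ∃ q : Polynomial ℂ,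
    (Polynomial.X : Polynomial ℂ) ^ (k + 1) ∣
      (1 + Polynomial.X * q) * (1 + Polynomial.X * q) - (1 + Polynomial.X) := by
  induction k with
  | zero => exact ⟨0, by simp⟩
  | succ k ih =>
    obtain ⟨q, r, hr⟩ := ih
    -- Halving the error term `X ^ (k + 1) * r` and subtracting it cancels the error to first order.
    have hhalf : (2 : Polynomial ℂ) * Polynomial.C (1 / 2) = 1 := by
      rw [← Polynomial.C_ofNat, ← Polynomial.C_mul]; norm_num
    set c : Polynomial ℂ := Polynomial.C (1 / 2)
    refine ⟨q - c * Polynomial.X ^ k * r,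
      -q * r + c ^ 2 * Polynomial.X ^ k * r ^ 2, ?_⟩
    linear_combination hr - (Polynomial.X ^ (k + 1) * r * (1 + Polynomial.X * q)) * hhalf

/-- Commuting type-lowering perturbations of the identity are determined by their squares. -/
lemma eq_of_mul_self_eq [FiniteDimensional ℂ V] {grading : ℤ × ℤ → Submodule ℂ V}
    (hinternal : DirectSum.IsInternal grading) {a b : Module.End ℂ V} (hab : Commute a b)
    (h : a * a = b * b) (ha : Lowers grading (a - 1)) (hb : Lowers grading (b - 1)) : a = b := by
  have hunit : IsUnit (a + b) := by
    have h2 : IsUnit (2 : Module.End ℂ V) := by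
      rw [← map_ofNat (algebraMap ℂ (Module.End ℂ V)) 2]
      exact (IsUnit.mk0 (2 : ℂ) two_ne_zero).map _
    have hnil := (ha.add hb).isNilpotent hinternal
    have := hnil.isUnit_add_left_of_commute h2 (Commute.ofNat_right _ 2)
    have hsum : a + b = 2 + ((a - 1) + (b - 1)) := by rw [← one_add_one_eq_two]; abel
    exact hsum ▸ this
  have hzero : (a + b) * (a - b) = 0 := by
    rw [← hab.mul_self_sub_mul_self_eq, h, sub_self]
  exact sub_eq_zero.1 (hunit.mul_right_eq_zero.1 hzero)

theorem exists_unique_sqrt_unipotent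
    [FiniteDimensional ℂ V]
    (grading : ℤ × ℤ → Submodule ℂ V)
    (hinternal : DirectSum.IsInternal grading)
    -- `σ` is an antilinear (conjugate-linear) involution with `σ (V^{pq}) = V^{qp}`:
    (σ : V →ₛₗ[starRingEnd ℂ] V)
    (hσινv : ∀ x : V, σ (σ x) = x)
    (hσgr : ∀ p q : ℤ, ∀ x ∈ grading (p, q), σ x ∈ grading (q, p))
    -- `d` is a `ℂ`-linear automorphism with `σ ∘ d ∘ σ = d⁻¹` which lowers types:
    (d : V ≃ₗ[ℂ] V)
    (hdσ : ∀ x : V, σ (d (σ x)) = d.symm x)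
    (hdlow : ∀ p q : ℤ, ∀ x ∈ grading (p, q),
      d x - x ∈ strictlyLower grading p q) :
    ∃! e : V ≃ₗ[ℂ] V,
      (∀ x : V, e (e x) = d x) ∧
      (∀ x : V, σ (e (σ x)) = e.symm x) ∧
      (∀ p q : ℤ, ∀ x ∈ grading (p, q),
        e x - x ∈ strictlyLower grading p q) := by
  set D : Module.End ℂ V := d.toLinearMap with hD
  set D' : Module.End ℂ V := d.symm.toLinearMap with hD'
  have hDD' : D * D' = 1 := LinearMap.ext fun x => d.apply_symm_apply x
  have hD'D : D' * D = 1 := LinearMap.ext fun x => d.symm_apply_apply x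
  have hN : Lowers grading (D - 1) := hdlow
  obtain ⟨k, hk⟩ := hN.isNilpotent hinternal
  obtain ⟨q, r, hr⟩ := exists_sqrt_one_add_X k
  set Q := Polynomial.aeval (D - 1) q
  set E : Module.End ℂ V := 1 + (D - 1) * Q with hE
  have hElow : Lowers grading (E - 1) := by
    rw [hE, add_sub_cancel_left]; exact hN.mul_aeval q
  have hEE : E * E = D := by
    have := congrArg (Polynomial.aeval (D - 1)) hr
    simp only [map_sub, map_mul, map_add, map_one, map_pow, Polynomial.aeval_X, pow_succ, hk,
      zero_mul, add_sub_cancel] at this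
    exact sub_eq_zero.1 this
  have hcomm (A : Module.End ℂ V) (hA : Commute A D) : Commute A E := by
    have hAN : Commute A (D - 1) := hA.sub_right (Commute.one_right A)
    have hAQ : Commute A Q :=
      Algebra.commute_of_mem_adjoin_singleton_of_commute
        (Polynomial.aeval_mem_adjoin_singleton ℂ (D - 1)) hAN
    exact (Commute.one_right A).add_right (hAN.mul_right hAQ)
  set F : Module.End ℂ V := (σ.comp (E.comp σ) : V →ₗ[ℂ] V) with hF
  have hFapp (x : V) : F x = σ (E (σ x)) := rfl
  have hFF : F * F = D' := LinearMap.ext fun x => by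
    rw [Module.End.mul_apply, hFapp, hFapp, hσινv, ← Module.End.mul_apply E E, hEE]
    exact hdσ x
  have hFlow : Lowers grading (F - 1) := by
    convert hElow.conj σ hσgr using 1
    ext x
    simp [hFapp, hσινv]
  have hFE : Commute F E := by
    refine hcomm F ?_
    have hFD' : Commute F D' := hFF ▸ (Commute.refl F).mul_right (Commute.refl F)
    exact Commute.units_inv_right (u := ⟨D', D, hD'D, hDD'⟩) hFD'
  have hFE1 : F * E = 1 := by
    refine eq_of_mul_self_eq hinternal (Commute.one_right _) ?_ ?_ (fun p q x _ => by simp)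
    · rw [hFE.symm.mul_mul_mul_comm, hFF, hEE, hD'D, one_mul]
    · have : F * E - 1 = (F - 1) * (E - 1) + ((F - 1) + (E - 1)) := by noncomm_ring
      rw [this]
      exact (hFlow.mul hElow).add (hFlow.add hElow)
  have hEF1 : E * F = 1 := hFE.eq ▸ hFE1
  refine ⟨LinearEquiv.ofLinearMap E F hEF1 hFE1,
    ⟨fun x => LinearMap.congr_fun hEE x, fun x => rfl, hElow⟩, ?_⟩
  rintro e ⟨hee, -, helow⟩
  set A : Module.End ℂ V := e.toLinearMap with hA
  have hAA : A * A = D := LinearMap.ext hee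
  have hAD : Commute A D := hAA ▸ (Commute.refl A).mul_right (Commute.refl A)
  have hAE : A = E :=
    eq_of_mul_self_eq hinternal (hcomm A hAD) (hAA.trans hEE.symm) helow hElow
  exact LinearEquiv.ext fun x => LinearMap.congr_fun hAE x

end
end
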